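/- arXiv:2503.22960 — 8 statements merged into one kernel-verified Lean document; each statement's English description precedes it below -/
import Mathlib

section
/- Let q be an integer with q ≥ 3 and let A ⊂ ℚ be a finite set with #A ≥ 2. Then the following three statements are equivalent: (i) the Hausdorff dimension of K(q,A) is strictly less than 1; (ii) the set K(q,A) has empty interior in ℝ; (iii) for every integer p ≥ 2 with gcd(p,q) = 1, the intersection D_p ∩ K(q,A) is a finite set. -/
open MeasureTheory

/-- The self-similar set `K(q,A) = { ∑_{i=1}^∞ a_i/q^i : a_i ∈ A }`. -/
noncomputable def Kset (q : ℕ) (A : Finset ℚ) : Set ℝ :=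
  { x : ℝ | ∃ a : ℕ → ℚ, (∀ i, a i ∈ A) ∧ x = ∑' i : ℕ, (a i : ℝ) / (q : ℝ) ^ (i + 1) }

/-- The set `D_p = ⋃_{n≥1} ℤ/pⁿ` of rationals with a finite `p`-ary expansion. -/
def Dset (p : ℕ) : Set ℝ :=
  { x : ℝ | ∃ n : ℕ, 1 ≤ n ∧ ∃ m : ℤ, x = (m : ℝ) / (p : ℝ) ^ n }


lemma iter_int (K : Set ℝ) (q : ℕ) (hK : ∀ x ∈ K, ∃ s : ℤ, (q:ℝ) * x - s ∈ K) (n : ℕ) :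
    ∀ x ∈ K, ∃ s : ℤ, (q:ℝ)^n * x - s ∈ K := by
  induction n with
  | zero => intro x hx; exact ⟨0, by simpa using hx⟩
  | succ n ih =>
    intro x hx
    obtain ⟨s, hs⟩ := ih x hx
    obtain ⟨t, ht⟩ := hK _ hs
    refine ⟨q * s + t, ?_⟩
    convert ht using 1
    push_cast
    ring

lemma interior_biUnion_translate (K : Set ℝ) (hc : IsClosed K) (hi : interior K = ∅)
    (B : Finset ℤ) : IsClosed {x : ℝ | ∃ b ∈ B, x - (b:ℝ) ∈ K} ∧
      interior {x : ℝ | ∃ b ∈ B, x - (b:ℝ) ∈ K} = ∅ := by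
  induction B using Finset.induction_on with
  | empty => simp
  | insert a s _ ih =>
    have e : {x : ℝ | ∃ b ∈ insert a s, x - (b:ℝ) ∈ K} =
        (Homeomorph.subRight (a:ℝ)) ⁻¹' K ∪ {x : ℝ | ∃ b ∈ s, x - (b:ℝ) ∈ K} := by
      ext x; simp
    have h1 : IsClosed ((Homeomorph.subRight (a:ℝ)) ⁻¹' K) :=
      hc.preimage (Homeomorph.subRight (a:ℝ)).continuous
    have h2 : interior ((Homeomorph.subRight (a:ℝ)) ⁻¹' K) = ∅ := by
      rw [← Homeomorph.preimage_interior, hi]; simp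
    rw [e]
    refine ⟨h1.union ih.1, ?_⟩
    rw [interior_union_isClosed_of_interior_empty h1 ih.2, h2]

lemma boxcount (K : Set ℝ) (hc : IsCompact K) (hi : interior K = ∅) (q : ℕ) (hq : 3 ≤ q)
    (hK : ∀ x ∈ K, ∃ s : ℤ, (q:ℝ) * x - s ∈ K) :
    ∃ m : ℕ, 1 ≤ m ∧ ∃ J : ℕ → Finset ℤ, ∃ C : ℕ,
      (∀ k, ∀ x ∈ K, ⌊((q:ℝ)^m)^k * x⌋ ∈ J k) ∧ ∀ k, (J k).card ≤ C * (q^m - 1)^k := by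
  obtain ⟨R, hR⟩ := hc.isBounded.exists_norm_le
  obtain ⟨L, hL⟩ := exists_nat_gt (R + 1)
  let B : Finset ℤ := Finset.Icc (-(L:ℤ)) L
  obtain ⟨hU1, hU2⟩ := interior_biUnion_translate K hc.isClosed hi B
  set U := {x : ℝ | ∃ b ∈ B, x - (b:ℝ) ∈ K} with hU
  have : ∃ u ∈ Set.Ioo (0:ℝ) 1, u ∉ U := by
    by_contra! h
    have h2 : Set.Ioo (0:ℝ) 1 ⊆ interior U := interior_maximal h isOpen_Ioo
    rw [hU2] at h2
    exact h2 (show (1/2:ℝ) ∈ _ by constructor <;> norm_num)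
  obtain ⟨u, hu, huU⟩ := this
  obtain ⟨ε, hε, hball⟩ := Metric.isOpen_iff.1 hU1.isOpen_compl u huU
  have hq1 : (1:ℝ) < q := by exact_mod_cast (by omega : 1 < q)
  obtain ⟨m, hm⟩ := pow_unbounded_of_one_lt (1/ε + q) hq1
  have hm1 : 1 ≤ m := by
    by_contra h
    have : m = 0 := by omega
    subst this
    have : 0 < 1/ε := by positivity
    rw [pow_zero] at hm
    linarith
  have hM : 1 < (q:ℝ)^m * ε := by
    have : 1/ε < (q:ℝ)^m := by linarith
    rwa [div_lt_iff₀ hε] at this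
  have hMpos : (0:ℝ) < (q:ℝ)^m := by positivity
  let i0 : ℤ := ⌊(q:ℝ)^m * u⌋
  have hi0 : ∀ w ∈ U, ⌊(q:ℝ)^m * w⌋ ≠ i0 := by
    intro w hw h
    have h1 := Int.abs_sub_lt_one_of_floor_eq_floor h
    rw [← mul_sub, abs_mul, abs_of_pos hMpos] at h1
    have h2 : |w - u| < ε := by
      by_contra! h3
      have := mul_le_mul_of_nonneg_left h3 hMpos.le
      linarith
    exact hball (by simpa [Real.dist_eq] using h2) hw
  have hi0mem : i0 ∈ Finset.Ico (0:ℤ) ((q:ℤ)^m) := by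
    simp only [Finset.mem_Ico]
    constructor
    · exact Int.floor_nonneg.2 (mul_nonneg hMpos.le hu.1.le)
    · apply Int.floor_lt.2
      push_cast
      nlinarith [hu.2]
  let D : Finset ℤ := (Finset.Ico (0:ℤ) ((q:ℤ)^m)).erase i0
  have hD : D.card = q^m - 1 := by
    rw [Finset.card_erase_of_mem hi0mem]
    simp only [Int.card_Ico, sub_zero]
    congr 1
  let J : ℕ → Finset ℤ := fun k => Nat.rec B
    (fun _ J => (J ×ˢ D).image (fun z => (q:ℤ)^m * z.1 + z.2)) k
  refine ⟨m, hm1, J, B.card, ?_, ?_⟩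
  · intro k
    induction k with
    | zero =>
      intro x hx
      have := abs_le.1 (hR x hx)
      show _ ∈ B
      simp only [pow_zero, one_mul, B, Finset.mem_Icc]
      constructor
      · apply Int.le_floor.2; push_cast; linarith
      · apply Int.le_of_lt
        apply Int.floor_lt.2; push_cast; linarith
    | succ k ih =>
      intro x hx
      have hj := ih x hx
      obtain ⟨s, hs⟩ := iter_int K q hK (m*k) x hx
      rw [pow_mul] at hs
      set y := ((q:ℝ)^m)^k * x with hy
      have e : ((q:ℝ)^m)^(k+1) * x = (q:ℝ)^m * (y - ⌊y⌋) + (((q:ℤ)^m * ⌊y⌋ : ℤ) : ℝ) := by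
        push_cast; rw [hy]; ring
      rw [e, Int.floor_add_intCast]
      show _ ∈ (J k ×ˢ D).image (fun z => (q:ℤ)^m * z.1 + z.2)
      refine Finset.mem_image.2 ⟨(⌊y⌋, ⌊(q:ℝ)^m * (y - ⌊y⌋)⌋), ?_, by simp [add_comm]⟩
      refine Finset.mem_product.2 ⟨hj, ?_⟩
      have f1 := Int.floor_le y
      have f2 := Int.lt_floor_add_one y
      refine Finset.mem_erase.2 ⟨hi0 _ ?_, ?_⟩
      · refine ⟨s - ⌊y⌋, ?_, ?_⟩
        · have := abs_le.1 (hR _ hs)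
          simp only [B, Finset.mem_Icc]
          constructor
          · have : (-(L:ℝ)) ≤ s - ⌊y⌋ := by linarith
            exact_mod_cast this
          · have : (s:ℝ) - ⌊y⌋ ≤ L := by linarith
            exact_mod_cast this
        · convert hs using 1
          push_cast; ring
      · simp only [Finset.mem_Ico]
        constructor
        · exact Int.floor_nonneg.2 (mul_nonneg hMpos.le (by linarith))
        · apply Int.floor_lt.2
          push_cast
          nlinarith
  · intro k
    induction k with
    | zero => simp [J]
    | succ k ih =>
      calc (J (k+1)).card ≤ (J k ×ˢ D).card := Finset.card_image_le
        _ = (J k).card * (q^m-1) := by rw [Finset.card_product, hD]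
        _ ≤ B.card * (q^m-1)^k * (q^m-1) := Nat.mul_le_mul_right _ ih
        _ = _ := by ring

lemma lte_bound (p n Q t d : ℕ) (hQ : 2 ≤ Q) (hp : p ∣ Q - 1) (h4 : 2 ∣ p → 4 ∣ Q - 1)
    (hd : d ∣ p^n) (ht : 0 < t) (h : d ∣ Q^t - 1) : d ≤ (Q-1)*t := by
  apply Nat.le_of_dvd (Nat.mul_pos (by omega) ht)
  rw [Nat.dvd_iff_prime_pow_dvd_dvd]
  intro l k hl hk
  rcases Nat.eq_zero_or_pos k with rfl | hk0
  · simp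
  have hlp : l ∣ p := hl.dvd_of_dvd_pow (((dvd_pow_self l hk0.ne').trans hk).trans hd)
  have hlQ : l ∣ Q - 1 := hlp.trans hp
  have hlQ' : ¬ l ∣ Q := by
    intro h'
    have := (Nat.dvd_sub_iff_right (by omega) h').1 hlQ
    exact hl.one_lt.ne' (Nat.dvd_one.1 this)
  have h2 := hk.trans h
  rw [pow_dvd_iff_le_emultiplicity] at h2 ⊢
  rw [emultiplicity_mul hl.prime]
  refine h2.trans (le_of_eq ?_)
  rcases hl.eq_two_or_odd' with rfl | hodd
  · have := Int.two_pow_sub_pow' (x := Q) (y := 1) t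
      (by have := h4 hlp; zify [show 1 ≤ Q by omega] at this; exact this) (by exact_mod_cast hlQ')
    rw [one_pow] at this
    rw [← Int.natCast_emultiplicity, ← Int.natCast_emultiplicity 2 (Q-1),
      ← Int.natCast_emultiplicity 2 t, Nat.cast_sub (Nat.one_le_pow _ _ (by omega)),
      Nat.cast_sub (by omega)]
    exact_mod_cast this
  · have := Nat.emultiplicity_pow_sub_pow hl hodd (x := Q) (y := 1) hlQ hlQ' t
    rwa [one_pow] at this

lemma exists_Q (p M : ℕ) (hp : 2 ≤ p) (hM : 2 ≤ M) (h : Nat.Coprime p M) :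
    ∃ r, 1 ≤ r ∧ p ∣ M^r - 1 ∧ (2 ∣ p → 4 ∣ M^r - 1) := by
  refine ⟨2 * p.totient, ?_, ?_, ?_⟩
  · have := Nat.totient_pos.2 (show 0 < p by omega); omega
  · have := (Nat.ModEq.pow_totient h.symm).pow 2
    rw [← pow_mul, mul_comm, one_pow] at this
    exact (Nat.modEq_iff_dvd' (Nat.one_le_pow _ _ (by omega))).1 this.symm
  · intro h2
    have hodd : Odd M := by
      rw [← Nat.not_even_iff_odd, even_iff_two_dvd]
      intro h3
      have := Nat.dvd_gcd h2 h3
      rw [h] at this; omega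
    have h3 : 4 ∣ M^2 - 1 := by
      obtain ⟨a, rfl⟩ := hodd
      exact ⟨a^2+a, by rw [show (2*a+1)^2 = 4*(a^2+a) + 1 by ring]; simp⟩
    rw [pow_mul]
    exact h3.trans (by simpa using Nat.sub_one_dvd_pow_sub_one (M^2) p.totient)

lemma dim_lt (K : Set ℝ) (M : ℕ) (hM : 3 ≤ M) (J : ℕ → Finset ℤ) (C : ℕ)
    (hJ : ∀ k, ∀ x ∈ K, ⌊((M:ℝ))^k * x⌋ ∈ J k) (hC : ∀ k, (J k).card ≤ C * (M - 1)^k) :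
    dimH K < 1 := by
  have hM3 : (3:ℝ) ≤ M := by exact_mod_cast hM
  have hl : 0 < Real.log M := Real.log_pos (by linarith)
  have hl1 : 0 < Real.log (M - 1) := Real.log_pos (by linarith)
  have hs0 : 0 ≤ Real.log (M-1) / Real.log M := by positivity
  have hs1 : Real.log (M-1) / Real.log M < 1 := by
    rw [div_lt_one hl]
    exact Real.log_lt_log (by linarith) (by linarith)
  set s : NNReal := ⟨Real.log (M-1) / Real.log M, hs0⟩ with hs
  have hMs : (M:ℝ) ^ (s:ℝ) = M - 1 := by
    show (M:ℝ) ^ (Real.log (M-1) / Real.log M) = M - 1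
    rw [Real.rpow_def_of_pos (by linarith), mul_div_cancel₀ _ hl.ne', Real.exp_log (by linarith)]
  have hdim : dimH K ≤ s := by
    apply dimH_le_of_hausdorffMeasure_ne_top
    have hmeas := Measure.hausdorffMeasure_le_liminf_sum (ι := fun k => {j // j ∈ J k}) (s:ℝ) K
      (l := Filter.atTop) (fun k : ℕ => ENNReal.ofReal (((M:ℝ)⁻¹)^k))
      (by
        rw [← ENNReal.ofReal_zero]
        apply ENNReal.tendsto_ofReal
        apply tendsto_pow_atTop_nhds_zero_of_lt_one (by positivity)
        exact inv_lt_one_of_one_lt₀ (by linarith))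
      (fun k j => Set.Icc ((j.1:ℝ) / (M:ℝ)^k) ((j.1+1:ℝ) / (M:ℝ)^k))
      (by
        refine Filter.Eventually.of_forall fun k j => ?_
        rw [Real.ediam_Icc]
        apply le_of_eq
        congr 1
        rw [inv_pow]
        field_simp
        ring)
      (by
        refine Filter.Eventually.of_forall fun k x hx => ?_
        have hp : (0:ℝ) < (M:ℝ)^k := by positivity
        refine Set.mem_iUnion.2 ⟨⟨_, hJ k x hx⟩, ?_, ?_⟩
        · rw [div_le_iff₀ hp, mul_comm x]
          exact Int.floor_le _
        · rw [le_div_iff₀ hp, mul_comm x]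
          exact (Int.lt_floor_add_one _).le)
    refine ne_top_of_le_ne_top (b := (C:ENNReal)) (by simp) (hmeas.trans ?_)
    refine (Filter.liminf_le_liminf (v := fun _ => (C:ENNReal)) (Filter.Eventually.of_forall ?_)).trans
      (by rw [Filter.liminf_const])
    intro k
    have e : ∀ j : {j // j ∈ J k}, Metric.ediam (Set.Icc ((j.1:ℝ) / (M:ℝ)^k) ((j.1+1:ℝ) / (M:ℝ)^k)) ^ (s:ℝ)
        = ENNReal.ofReal ((((M:ℝ)-1)^k)⁻¹) := by
      intro j
      rw [Real.ediam_Icc, show ((j.1+1:ℝ) / (M:ℝ)^k) - ((j.1:ℝ) / (M:ℝ)^k) = ((M:ℝ)^k)⁻¹ by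
        field_simp; ring]
      rw [ENNReal.ofReal_rpow_of_nonneg (by positivity) s.coe_nonneg]
      congr 1
      rw [Real.inv_rpow (by positivity), ← Real.rpow_natCast, ← Real.rpow_mul (by positivity),
        mul_comm, Real.rpow_mul (by positivity), hMs, Real.rpow_natCast]
    show ∑ j : {j // j ∈ J k}, Metric.ediam (Set.Icc ((j.1:ℝ) / (M:ℝ)^k) ((j.1+1:ℝ) / (M:ℝ)^k)) ^ (s:ℝ) ≤ C
    rw [Finset.sum_congr rfl (fun j _ => e j), Finset.sum_const, nsmul_eq_mul]
    have hpos : (0:ℝ) < ((M:ℝ)-1)^k := pow_pos (by linarith) _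
    rw [← ENNReal.ofReal_natCast, ← ENNReal.ofReal_natCast C, ← ENNReal.ofReal_mul (by positivity)]
    apply ENNReal.ofReal_le_ofReal
    rw [← div_eq_mul_inv, div_le_iff₀ hpos]
    have := hC k
    simp only [Finset.card_univ, Fintype.card_coe]
    have h2 : ((J k).card : ℝ) ≤ ((C * (M-1)^k : ℕ) : ℝ) := by exact_mod_cast this
    rw [Nat.cast_mul, Nat.cast_pow, Nat.cast_sub (by omega)] at h2
    simpa using h2
  refine hdim.trans_lt ?_
  exact_mod_cast (show s < 1 from hs1)

lemma finite_part (K : Set ℝ) (hc : IsCompact K) (M : ℕ) (hM : 3 ≤ M) (J : ℕ → Finset ℤ) (C : ℕ)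
    (hK : ∀ x ∈ K, ∃ s : ℤ, (M:ℝ) * x - s ∈ K)
    (hJ : ∀ k, ∀ x ∈ K, ⌊((M:ℝ))^k * x⌋ ∈ J k) (hC : ∀ k, (J k).card ≤ C * (M - 1)^k)
    (p : ℕ) (hp : 2 ≤ p) (hpM : Nat.Coprime p M) : (Dset p ∩ K).Finite := by
  obtain ⟨R, hR⟩ := hc.isBounded.exists_norm_le
  obtain ⟨L, hL⟩ := exists_nat_gt R
  obtain ⟨r, hr1, hQp, hQ4⟩ := exists_Q p M hp (by omega) hpM
  set Q := M^r with hQ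
  have hQ2 : 2 ≤ Q := (show 2 ≤ M by omega).trans (Nat.le_self_pow (by omega) M)
  have hpQ : Nat.Coprime p Q := hpM.pow_right r
  have hM3 : (3:ℝ) ≤ M := by exact_mod_cast hM
  have hratio : (1:ℝ) < M / (M-1) := by rw [one_lt_div (by linarith)]; linarith
  obtain ⟨k0, hk0⟩ := pow_unbounded_of_one_lt (((Q-1:ℕ):ℝ) * C * (M-1)) hratio
  have hbig : ∀ k, k0 ≤ k → (Q-1) * (C * (M-1)^(k+1)) < M^k := by
    intro k hk
    have h1 := hk0.trans_le (pow_le_pow_right₀ hratio.le hk)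
    have hpos : (0:ℝ) < ((M:ℝ)-1)^k := pow_pos (by linarith) _
    rw [div_pow, lt_div_iff₀ hpos] at h1
    have h2 : (((Q-1) * (C * (M-1)^(k+1)) : ℕ) : ℝ) < ((M^k:ℕ):ℝ) := by
      rw [Nat.cast_mul, Nat.cast_mul, Nat.cast_pow, Nat.cast_pow, Nat.cast_sub (show 1 ≤ M by omega)]
      refine lt_of_eq_of_lt ?_ h1
      push_cast; ring
    exact_mod_cast h2
  have key : ∀ x : ℚ, ∀ n, x.den ∣ p^n → (x:ℝ) ∈ K → x.den ≤ M^k0 := by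
    intro x n hd hx
    by_contra! hcon
    obtain ⟨k, hk1, hk2⟩ := exists_nat_pow_near (x := x.den) (y := M) x.pos (by omega)
    have hkk : k0 ≤ k := by
      have := hcon.trans hk2
      have := (Nat.pow_lt_pow_iff_right (show 1 < M by omega)).1 this
      omega
    have hy : ∀ t : ℕ, ∃ s : ℤ, (Q:ℝ)^t * x - s ∈ K := by
      intro t
      obtain ⟨s, hs⟩ := iter_int K M hK (r*t) x hx
      refine ⟨s, ?_⟩
      rw [pow_mul] at hs
      rw [hQ]; push_cast; exact hs
    choose S hS using hy
    have hcard : (J (k+1)).card < (Finset.range (C * (M-1)^(k+1) + 1)).card := by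
      rw [Finset.card_range]; exact Nat.lt_succ_of_le (hC _)
    obtain ⟨t, ht, t', ht', hne, heq⟩ := Finset.exists_ne_map_eq_of_card_lt_of_maps_to hcard
      (f := fun t => ⌊(M:ℝ)^(k+1) * ((Q:ℝ)^t * x - S t)⌋) (fun t _ => hJ _ _ (hS t))
    have main : ∀ t t' : ℕ, t < t' → t' < C * (M-1)^(k+1) + 1 →
        ⌊(M:ℝ)^(k+1) * ((Q:ℝ)^t * x - S t)⌋ = ⌊(M:ℝ)^(k+1) * ((Q:ℝ)^t' * x - S t')⌋ → False := by
      intro t t' htt ht' heq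
      have h1 := Int.abs_sub_lt_one_of_floor_eq_floor heq
      have hdx : (x.den:ℝ) * x = x.num := by
        have := Rat.den_mul_eq_num x
        exact_mod_cast this
      have hlt : (x.den:ℝ) < (M:ℝ)^(k+1) := by exact_mod_cast hk2
      rw [← mul_sub, abs_mul, abs_of_pos (by positivity)] at h1
      have h2 : |(((Q:ℤ)^t * x.num - x.den * S t - ((Q:ℤ)^t' * x.num - x.den * S t') : ℤ) : ℝ)| < 1 := by
        have e : (((Q:ℤ)^t * x.num - x.den * S t - ((Q:ℤ)^t' * x.num - x.den * S t') : ℤ) : ℝ)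
          = x.den * (((Q:ℝ)^t * x - S t) - ((Q:ℝ)^t' * x - S t')) := by
          push_cast; rw [← hdx]; ring
        rw [e, abs_mul, Nat.abs_cast]
        exact (mul_le_mul_of_nonneg_right hlt.le (abs_nonneg _)).trans_lt h1
      have h3 : ((Q:ℤ)^t * x.num - x.den * S t - ((Q:ℤ)^t' * x.num - x.den * S t')) = 0 := by
        rw [← Int.abs_lt_one_iff]; exact_mod_cast h2
      obtain ⟨u, rfl⟩ := Nat.exists_eq_add_of_lt htt
      have h4 : (x.den:ℤ) ∣ x.num * ((Q:ℤ)^t * ((Q:ℤ)^(u+1) - 1)) := by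
        refine ⟨S (t+u+1) - S t, ?_⟩
        have e2 : (Q:ℤ)^(t+u+1) = (Q:ℤ)^t * (Q:ℤ)^(u+1) := by rw [← pow_add]; rfl
        rw [e2] at h3
        linear_combination -h3
      have hcop : IsCoprime (x.den:ℤ) x.num := by
        rw [Int.isCoprime_iff_nat_coprime]
        simpa using x.reduced.symm
      have h5 := hcop.dvd_of_dvd_mul_left h4
      have hcop2 : IsCoprime (x.den:ℤ) ((Q:ℤ)^t) := by
        apply IsCoprime.pow_right
        rw [Nat.isCoprime_iff_coprime]
        exact Nat.Coprime.coprime_dvd_left hd (hpQ.pow_left n)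
      have h6 := hcop2.dvd_of_dvd_mul_left h5
      have h7 : x.den ∣ Q^(u+1) - 1 := by
        zify [Nat.one_le_pow (u+1) Q (by omega)]
        exact h6
      have h8 := lte_bound p n Q (u+1) x.den hQ2 hQp hQ4 hd (by omega) h7
      have h9 : (Q-1)*(u+1) ≤ (Q-1) * (C * (M-1)^(k+1)) := Nat.mul_le_mul_left _ (by omega)
      have := hbig k hkk
      omega
    rw [Finset.mem_range] at ht ht'
    rcases lt_or_gt_of_ne hne with h | h
    · exact main t t' h ht' heq
    · exact main t' t h ht heq.symm
  have hfin : ((((Finset.Icc (-((L * M^k0 : ℕ):ℤ)) ((L*M^k0:ℕ):ℤ)) ×ˢ (Finset.range (M^k0+1))).image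
    (fun z => (z.1:ℝ) / (z.2:ℝ)) : Finset ℝ) : Set ℝ).Finite := Finset.finite_toSet _
  refine hfin.subset ?_
  rintro x ⟨⟨n, hn, a, rfl⟩, hx⟩
  set y : ℚ := (a:ℚ) / ((p^n : ℤ):ℚ) with hy
  have hyx : (y:ℝ) = (a:ℝ) / (p:ℝ)^n := by rw [hy]; push_cast; rfl
  have hden : y.den ∣ p^n := by
    have := Rat.den_dvd a (p^n)
    rw [Rat.divInt_eq_div, ← hy] at this
    exact_mod_cast this
  rw [← hyx] at hx ⊢
  have hk := key y n hden hx
  rw [Finset.mem_coe, Finset.mem_image]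
  have hdx : (y.den:ℝ) * y = y.num := by
    have := Rat.den_mul_eq_num y
    exact_mod_cast this
  have hdpos : (0:ℝ) < y.den := by exact_mod_cast y.pos
  refine ⟨(y.num, y.den), ?_, ?_⟩
  · rw [Finset.mem_product, Finset.mem_range, Finset.mem_Icc]
    refine ⟨?_, by omega⟩
    rw [← abs_le]
    have h1 : |(y.num:ℝ)| ≤ L * (M:ℝ)^k0 := by
      rw [← hdx, abs_mul, Nat.abs_cast, mul_comm]
      have h2 : |(y:ℝ)| ≤ L := (hR _ hx).trans hL.le
      have h3 : (y.den:ℝ) ≤ (M:ℝ)^k0 := by exact_mod_cast hk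
      exact mul_le_mul h2 h3 hdpos.le (by positivity)
    exact_mod_cast h1
  · rw [← hdx]
    simp only
    field_simp

lemma Kset_summable (q : ℕ) (hq : 3 ≤ q) (A : Finset ℚ) (a : ℕ → ℚ) (ha : ∀ i, a i ∈ A) :
    Summable (fun i : ℕ => (a i : ℝ) / (q:ℝ)^(i+1)) := by
  have hq3 : (3:ℝ) ≤ q := by exact_mod_cast hq
  have hg : Summable (fun i : ℕ => (∑ b ∈ A, |(b:ℝ)|) * ((q:ℝ)⁻¹)^(i+1)) := by
    apply Summable.mul_left
    exact (summable_nat_add_iff 1).2 (summable_geometric_of_lt_one (by positivity)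
      (inv_lt_one_of_one_lt₀ (by linarith)))
  refine Summable.of_norm_bounded hg ?_
  intro i
  rw [norm_div, norm_pow, div_eq_mul_inv, inv_pow]
  simp only [Real.norm_eq_abs, Nat.abs_cast]
  gcongr
  exact Finset.single_le_sum (f := fun b : ℚ => |(b:ℝ)|) (fun _ _ => abs_nonneg _) (ha i)

lemma Kset_compact (q : ℕ) (hq : 3 ≤ q) (A : Finset ℚ) : IsCompact (Kset q A) := by
  have hq3 : (3:ℝ) ≤ q := by exact_mod_cast hq
  have hg : Summable (fun i : ℕ => (∑ b ∈ A, |(b:ℝ)|) * ((q:ℝ)⁻¹)^(i+1)) := by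
    apply Summable.mul_left
    exact (summable_nat_add_iff 1).2 (summable_geometric_of_lt_one (by positivity)
      (inv_lt_one_of_one_lt₀ (by linarith)))
  have hcont : Continuous (fun a : ℕ → {b // b ∈ A} => ∑' i : ℕ, ((a i).1 : ℝ) / (q:ℝ)^(i+1)) := by
    refine continuous_tsum ?_ hg ?_
    · intro i
      have : Continuous (fun a : ℕ → {b // b ∈ A} => ((a i).1 : ℝ)) :=
        Rat.continuous_coe_real.comp (continuous_subtype_val.comp (continuous_apply i))
      exact this.div_const _
    · intro i a
      rw [norm_div, norm_pow, div_eq_mul_inv, inv_pow]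
      simp only [Real.norm_eq_abs, Nat.abs_cast]
      gcongr
      exact Finset.single_le_sum (f := fun b : ℚ => |(b:ℝ)|) (fun _ _ => abs_nonneg _) (a i).2
  have e : Kset q A = Set.range (fun a : ℕ → {b // b ∈ A} => ∑' i : ℕ, ((a i).1 : ℝ) / (q:ℝ)^(i+1)) := by
    ext x
    constructor
    · rintro ⟨a, ha, rfl⟩
      exact ⟨fun i => ⟨a i, ha i⟩, rfl⟩
    · rintro ⟨a, rfl⟩
      exact ⟨fun i => (a i).1, fun i => (a i).2, rfl⟩
  rw [e]
  exact isCompact_range hcont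

lemma Kset_shift (q : ℕ) (hq : 3 ≤ q) (A : Finset ℚ) (x : ℝ) (hx : x ∈ Kset q A) :
    ∃ b ∈ A, (q:ℝ) * x - b ∈ Kset q A := by
  obtain ⟨a, ha, rfl⟩ := hx
  have hq3 : (3:ℝ) ≤ q := by exact_mod_cast hq
  refine ⟨a 0, ha 0, fun i => a (i+1), fun i => ha _, ?_⟩
  rw [(Kset_summable q hq A a ha).tsum_eq_zero_add, mul_add, ← tsum_mul_left]
  have e : ∀ i : ℕ, (q:ℝ) * ((a (i+1) : ℝ) / (q:ℝ)^(i+1+1)) = (a (i+1) : ℝ) / (q:ℝ)^(i+1) := by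
    intro i
    field_simp
    ring
  simp_rw [e]
  field_simp
  ring

lemma common_den (A : Finset ℚ) : ∃ N : ℕ, 0 < N ∧ ∀ b ∈ A, ∃ s : ℤ, (N:ℝ) * b = s := by
  refine ⟨∏ b ∈ A, b.den, Finset.prod_pos fun b _ => b.pos, ?_⟩
  intro b hb
  obtain ⟨c, hc⟩ := Finset.dvd_prod_of_mem (fun b : ℚ => b.den) hb
  have hdx : (b.den:ℝ) * b = b.num := by
    have := Rat.den_mul_eq_num b
    exact_mod_cast this
  refine ⟨c * b.num, ?_⟩
  rw [hc]; push_cast; rw [← hdx]; ring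

lemma main_dir (q : ℕ) (hq : 3 ≤ q) (A : Finset ℚ) (hi : interior (Kset q A) = ∅) :
    dimH (Kset q A) < 1 ∧ ∀ p : ℕ, 2 ≤ p → Nat.Coprime p q → (Dset p ∩ Kset q A).Finite := by
  obtain ⟨N, hN, hNA⟩ := common_den A
  have hN0 : (N:ℝ) ≠ 0 := by positivity
  let e : ℝ ≃ₜ ℝ := Homeomorph.mulLeft₀ (N:ℝ) hN0
  have he : ∀ x, e x = N * x := fun x => rfl
  set K := e '' Kset q A with hKdef
  have hc : IsCompact K := (Kset_compact q hq A).image e.continuous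
  have hiK : interior K = ∅ := by rw [hKdef, ← Homeomorph.image_interior, hi]; simp
  have hK : ∀ x ∈ K, ∃ s : ℤ, (q:ℝ) * x - s ∈ K := by
    rintro _ ⟨x, hx, rfl⟩
    obtain ⟨b, hb, h⟩ := Kset_shift q hq A x hx
    obtain ⟨s, hs⟩ := hNA b hb
    refine ⟨s, _, h, ?_⟩
    rw [he, he, ← hs]; ring
  obtain ⟨m, hm, J, C, hJ, hC⟩ := boxcount K hc hiK q hq hK
  have hM : 3 ≤ q^m := hq.trans (Nat.le_self_pow (by omega) q)
  have hJ' : ∀ k, ∀ x ∈ K, ⌊((q^m:ℕ):ℝ)^k * x⌋ ∈ J k := by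
    intro k x hx; rw [Nat.cast_pow]; exact hJ k x hx
  have hK' : ∀ x ∈ K, ∃ s : ℤ, ((q^m:ℕ):ℝ) * x - s ∈ K := by
    intro x hx; rw [Nat.cast_pow]; exact iter_int K q hK m x hx
  constructor
  · refine lt_of_le_of_lt ?_ (dim_lt K (q^m) hM J C hJ' hC)
    have hlip : LipschitzWith ‖((N:ℝ)⁻¹)‖₊ (fun x : ℝ => (N:ℝ)⁻¹ * x) := by
      simpa [smul_eq_mul] using lipschitzWith_smul (β := ℝ) ((N:ℝ)⁻¹)
    have h := hlip.dimH_image_le K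
    have e2 : (fun x : ℝ => (N:ℝ)⁻¹ * x) '' K = Kset q A := by
      rw [hKdef, Set.image_image]
      convert Set.image_id _ using 2
      funext x
      rw [he]; simp [hN0]
    rwa [e2] at h
  · intro p hp hpq
    have hf := finite_part K hc (q^m) hM J C hK' hJ' hC p hp (hpq.pow_right m)
    refine Set.Finite.of_finite_image (f := e) (hf.subset ?_) e.injective.injOn
    rintro _ ⟨x, ⟨⟨n, hn, a, rfl⟩, hx⟩, rfl⟩
    refine ⟨⟨n, hn, N * a, ?_⟩, ⟨_, hx, rfl⟩⟩
    rw [he]; push_cast; ring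

lemma Dset_dense (p : ℕ) (hp : 2 ≤ p) : Dense (Dset p) := by
  rw [dense_iff_exists_between]
  intro a b hab
  have hp1 : (1:ℝ) < p := by exact_mod_cast (by omega : 1 < p)
  obtain ⟨n, hn⟩ := pow_unbounded_of_one_lt (1/(b-a)) hp1
  have hn' : 1/(b-a) < (p:ℝ)^(n+1) :=
    hn.trans_le (pow_le_pow_right₀ hp1.le (by omega))
  have hP : (0:ℝ) < (p:ℝ)^(n+1) := by positivity
  rw [div_lt_iff₀ (by linarith)] at hn'
  refine ⟨_, ⟨n+1, by omega, ⌊(p:ℝ)^(n+1) * a⌋ + 1, rfl⟩, ?_, ?_⟩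
  · rw [lt_div_iff₀ hP, mul_comm]; push_cast; exact Int.lt_floor_add_one _
  · rw [div_lt_iff₀ hP]; push_cast
    have := Int.floor_le ((p:ℝ)^(n+1) * a)
    linarith

theorem rational_points_equivalence (q : ℕ) (hq : 3 ≤ q) (A : Finset ℚ) (hA : 2 ≤ A.card) :
    (dimH (Kset q A) < 1 ↔ interior (Kset q A) = ∅) ∧
    (interior (Kset q A) = ∅ ↔
      ∀ p : ℕ, 2 ≤ p → Nat.Coprime p q → (Dset p ∩ Kset q A).Finite) := by
  refine ⟨⟨?_, fun h => (main_dir q hq A h).1⟩, ⟨fun h => (main_dir q hq A h).2, ?_⟩⟩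
  · intro h
    by_contra hne
    have := Real.dimH_of_nonempty_interior (Set.nonempty_iff_ne_empty.2 hne)
    rw [this] at h
    simp at h
  · intro h
    by_contra hne
    obtain ⟨x, hx⟩ := Set.nonempty_iff_ne_empty.2 hne
    have hf := h (q+1) (by omega) (by simp)
    have hsub : interior (Kset q A) ⊆ closure (Dset (q+1) ∩ Kset q A) := by
      refine ((Dset_dense (q+1) (by omega)).open_subset_closure_inter isOpen_interior).trans ?_
      apply closure_mono
      rintro y ⟨hy1, hy2⟩
      exact ⟨hy2, interior_subset hy1⟩
    rw [hf.isClosed.closure_eq] at hsub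
    exact infinite_of_mem_nhds x (isOpen_interior.mem_nhds hx) (hf.subset hsub)
end

section
/- Let q be an integer with q ≥ 3 and let A ⊂ ℚ be a finite set with #A ≥ 2. If the Hausdorff dimension of K(q,A) is strictly less than 1, then for every integer p ≥ 2 with gcd(p,q) = 1, the intersection D_p ∩ K(q,A) is a finite set. -/
open MeasureTheory

lemma aux_dvd (p N n k : ℕ) (Q : ℤ) (hp : (p : ℤ) ∣ Q - 1) (h4 : 2 ∣ p → (4 : ℤ) ∣ Q - 1)
    (hN : N ∣ p ^ n) (h : (N : ℤ) ∣ Q ^ k - 1) : (N : ℤ) ∣ (Q - 1) * k := by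
  rw [← Int.dvd_natAbs, Int.natCast_dvd_natCast]
  rw [Nat.dvd_iff_prime_pow_dvd_dvd]
  intro l e hl hle
  rcases Nat.eq_zero_or_pos e with rfl | he
  · simp
  have hlp : l ∣ p := by
    have : l ∣ p ^ n := (dvd_pow_self l he.ne').trans (hle.trans hN)
    exact hl.dvd_of_dvd_pow this
  have hlQ : (l : ℤ) ∣ Q - 1 := (Int.natCast_dvd_natCast.2 hlp).trans hp
  have hlp' : Prime (l : ℤ) := Nat.prime_iff_prime_int.1 hl
  have hnl : ¬ (l : ℤ) ∣ Q := by
    intro h1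
    have : (l : ℤ) ∣ 1 := by simpa using dvd_sub h1 hlQ
    exact hlp'.not_isUnit (isUnit_of_dvd_one this)
  have hd : (l : ℤ) ^ e ∣ Q ^ k - 1 := by
    refine dvd_trans ?_ h
    exact_mod_cast hle
  rw [← Int.natCast_dvd_natCast, Int.dvd_natAbs]
  push_cast
  rw [pow_dvd_iff_le_emultiplicity] at hd ⊢
  rw [emultiplicity_mul hlp']
  refine hd.trans (le_of_eq ?_)
  rcases hl.eq_two_or_odd' with rfl | hodd
  · have := Int.two_pow_sub_pow' (x := Q) (y := 1) k (h4 hlp) (by simpa using hnl)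
    simpa using this
  · have := Int.emultiplicity_pow_sub_pow hl hodd (x := Q) (y := 1) hlQ hnl k
    rw [Int.natCast_emultiplicity]
    simpa using this

lemma aux_sep (K : Set ℝ) (hK : IsCompact K) (hv : volume K = 0) (d C : ℕ) (hd : 0 < d)
    (hC : 0 < C) : ∃ N0 : ℕ, ∀ N ≥ N0, 0 < N → ∀ S : Finset ℤ,
      (∀ z ∈ S, (z : ℝ) / (d * N) ∈ K) → C * S.card < N := by
  have h1 : Filter.Tendsto (fun N : ℕ => volume (Metric.cthickening ((1 / (d : ℝ)) * (1 / (N : ℝ))) K))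
      Filter.atTop (nhds 0) := by
    have h2 := tendsto_measure_cthickening_of_isCompact (μ := volume) hK
    rw [hv] at h2
    refine h2.comp ?_
    have := (tendsto_one_div_atTop_nhds_zero_nat (𝕜 := ℝ)).const_mul (1 / (d : ℝ))
    simpa using this
  have hpos : (0 : ENNReal) < ENNReal.ofReal (1 / (C * d : ℝ)) := by
    rw [ENNReal.ofReal_pos]; positivity
  obtain ⟨N0, hN0⟩ := Filter.eventually_atTop.1 (h1.eventually (gt_mem_nhds hpos))
  refine ⟨N0, fun N hN hNp S hS => ?_⟩
  have hlt := hN0 N hN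
  have hdN : (0 : ℝ) < d * N := by positivity
  have hsub : (⋃ z ∈ S, Set.Ico ((z : ℝ) / (d * N)) ((z + 1 : ℝ) / (d * N))) ⊆
      Metric.cthickening ((1 / (d : ℝ)) * (1 / (N : ℝ))) K := by
    intro t ht
    simp only [Set.mem_iUnion] at ht
    obtain ⟨z, hz, ht⟩ := ht
    refine Metric.mem_cthickening_of_dist_le t _ _ _ (hS z hz) ?_
    rw [Real.dist_eq, abs_of_nonneg (by linarith [ht.1])]
    have h3 := ht.2
    have : (z + 1 : ℝ) / (d * N) = z / (d * N) + (1 / (d : ℝ)) * (1 / (N : ℝ)) := by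
      field_simp
    linarith
  have hm : volume (⋃ z ∈ S, Set.Ico ((z : ℝ) / (d * N)) ((z + 1 : ℝ) / (d * N))) =
      ENNReal.ofReal (S.card * (1 / (d * N))) := by
    rw [measure_biUnion_finset]
    · have : ∀ z ∈ S, volume (Set.Ico ((z : ℝ) / (d * N)) ((z + 1 : ℝ) / (d * N))) =
        ENNReal.ofReal (1 / (d * N)) := by
        intro z _
        rw [Real.volume_Ico]
        congr 1
        ring
      rw [Finset.sum_congr rfl this, Finset.sum_const, nsmul_eq_mul,
        ENNReal.ofReal_mul (by positivity), ENNReal.ofReal_natCast]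
    · intro a _ b _ hab
      refine Set.disjoint_left.2 fun t hta htb => hab ?_
      have e1 : (a : ℝ) < b + 1 := by
        have := hta.1.trans_lt htb.2
        rwa [div_lt_div_iff_of_pos_right hdN] at this
      have e2 : (b : ℝ) < a + 1 := by
        have := htb.1.trans_lt hta.2
        rwa [div_lt_div_iff_of_pos_right hdN] at this
      have e1' : a < b + 1 := by exact_mod_cast e1
      have e2' : b < a + 1 := by exact_mod_cast e2
      omega
    · intro z _
      exact measurableSet_Ico
  have hfin := (measure_mono hsub).trans_lt hlt
  rw [hm, ENNReal.ofReal_lt_ofReal_iff (by positivity)] at hfin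
  have hC' : (0 : ℝ) < C := by positivity
  have hd' : (0 : ℝ) < d := by positivity
  have hN' : (0 : ℝ) < N := by positivity
  rw [mul_one_div, div_lt_div_iff₀ hdN (by positivity)] at hfin
  have : (C * S.card : ℝ) < N := by
    by_contra hcon
    push Not at hcon
    nlinarith
  exact_mod_cast this

lemma aux_summable (q : ℕ) (hq : 3 ≤ q) (A : Finset ℚ) (a : ℕ → ℚ) (ha : ∀ i, a i ∈ A) :
    ∃ u : ℕ → ℝ, Summable u ∧ (∀ i, ∀ b ∈ A, ‖(b : ℝ) / (q : ℝ) ^ (i + 1)‖ ≤ u i) := by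
  have hq' : (1 : ℝ) < q := by exact_mod_cast (by omega : 1 < q)
  refine ⟨fun i => (∑ b ∈ A, |(b : ℝ)|) * ((q : ℝ)⁻¹) ^ i, ?_, ?_⟩
  · exact (summable_geometric_of_lt_one (by positivity) (inv_lt_one_of_one_lt₀ hq')).mul_left _
  · intro i b hb
    rw [norm_div, Real.norm_eq_abs, norm_pow, Real.norm_natCast, div_eq_mul_inv, ← inv_pow]
    refine mul_le_mul ?_ ?_ (by positivity) (by positivity)
    · exact Finset.single_le_sum (f := fun b : ℚ => |(b : ℝ)|) (fun _ _ => abs_nonneg _) hb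
    · exact pow_le_pow_of_le_one (by positivity) (inv_lt_one_of_one_lt₀ hq').le (by omega)

lemma aux_compact (q : ℕ) (hq : 3 ≤ q) (A : Finset ℚ) (hA : A.Nonempty) :
    IsCompact (Kset q A) := by
  obtain ⟨b, hb⟩ := hA
  obtain ⟨u, hu, hub⟩ := aux_summable q hq A (fun _ => b) (fun _ => hb)
  have hc : IsCompact (Set.univ.pi (fun _ : ℕ => (A : Set ℚ))) :=
    isCompact_univ_pi fun _ => A.finite_toSet.isCompact
  have hf : ContinuousOn (fun a : ℕ → ℚ => ∑' i : ℕ, (a i : ℝ) / (q : ℝ) ^ (i + 1))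
      (Set.univ.pi (fun _ : ℕ => (A : Set ℚ))) := by
    refine continuousOn_tsum (fun i => ?_) hu (fun i a ha => hub i _ (ha i trivial))
    exact ((Rat.continuous_coe_real.comp (continuous_apply i)).div_const _).continuousOn
  convert hc.image_of_continuousOn hf using 1
  ext x
  simp only [Kset, Set.mem_setOf_eq, Set.mem_image, Set.mem_univ_pi, Finset.mem_coe]
  exact ⟨fun ⟨a, h, e⟩ => ⟨a, h, e.symm⟩, fun ⟨a, h, e⟩ => ⟨a, h, e.symm⟩⟩

lemma aux_step (q : ℕ) (hq : 3 ≤ q) (A : Finset ℚ) (x : ℝ) (hx : x ∈ Kset q A) :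
    ∃ b ∈ A, q * x - (b : ℝ) ∈ Kset q A := by
  obtain ⟨a, ha, rfl⟩ := hx
  refine ⟨a 0, ha 0, fun i => a (i + 1), fun i => ha _, ?_⟩
  obtain ⟨u, hu, hub⟩ := aux_summable q hq A a ha
  have hs : Summable fun i : ℕ => (a i : ℝ) / (q : ℝ) ^ (i + 1) :=
    Summable.of_norm_bounded hu (fun i => hub i _ (ha i))
  have hq0 : (q : ℝ) ≠ 0 := by positivity
  rw [hs.tsum_eq_zero_add, mul_add, ← tsum_mul_left]
  have : (q : ℝ) * ((a 0 : ℝ) / (q : ℝ) ^ (0 + 1)) = a 0 := by rw [zero_add, pow_one]; field_simp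
  rw [this, add_sub_cancel_left]
  refine tsum_congr fun i => ?_
  rw [pow_succ (q : ℝ) (i + 1)]
  field_simp

lemma aux_orbit (q : ℕ) (hq : 3 ≤ q) (A : Finset ℚ) (d : ℕ)
    (hd : ∀ b ∈ A, ∃ m : ℤ, (d : ℝ) * (b : ℝ) = m) (x : ℝ) (hx : x ∈ Kset q A) (j : ℕ) :
    ∃ y ∈ Kset q A, ∃ m : ℤ, (d : ℝ) * (q ^ j * x - y) = m := by
  induction j with
  | zero => exact ⟨x, hx, 0, by simp⟩
  | succ j ih =>
    obtain ⟨y, hy, m, hm⟩ := ih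
    obtain ⟨b, hb, hy'⟩ := aux_step q hq A y hy
    obtain ⟨m0, hm0⟩ := hd b hb
    refine ⟨_, hy', q * m + m0, ?_⟩
    push_cast
    rw [← hm, ← hm0]
    ring

lemma aux_den (A : Finset ℚ) : ∃ d : ℕ, 0 < d ∧ ∀ b ∈ A, ∃ m : ℤ, (d : ℝ) * (b : ℝ) = m := by
  refine ⟨∏ b ∈ A, b.den, Finset.prod_pos fun b _ => b.den_pos, fun b hb => ?_⟩
  obtain ⟨c, hc⟩ := Finset.dvd_prod_of_mem (fun b : ℚ => b.den) hb
  refine ⟨c * b.num, ?_⟩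
  rw [hc]
  have : (b.den : ℝ) * (b : ℝ) = b.num := by exact_mod_cast Rat.den_mul_eq_num b
  push_cast
  rw [← this]
  ring

lemma aux_Q (p q : ℕ) (hp : 2 ≤ p) (hq : 3 ≤ q) (h : Nat.Coprime p q) :
    ∃ r : ℕ, 2 ≤ q ^ r ∧ (p : ℤ) ∣ (q : ℤ) ^ r - 1 ∧ (2 ∣ p → (4 : ℤ) ∣ (q : ℤ) ^ r - 1) := by
  have hphi : 0 < Nat.totient p := Nat.totient_pos.2 (by omega)
  refine ⟨2 * Nat.totient p, ?_, ?_, ?_⟩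
  · calc 2 ≤ q := by omega
      _ ≤ _ := Nat.le_self_pow (by omega) q
  · have h1 := Nat.ModEq.pow_totient h.symm
    have h2 : (p : ℤ) ∣ (q : ℤ) ^ Nat.totient p - 1 := by
      have := (Nat.modEq_iff_dvd.1 h1.symm)
      simpa using this
    refine h2.trans ?_
    rw [mul_comm, pow_mul]
    exact sub_one_dvd_pow_sub_one _ _
  · intro h2
    have hodd : Odd q := by
      rw [← Nat.not_even_iff_odd, even_iff_two_dvd]
      intro h3
      have := Nat.dvd_gcd h2 h3
      rw [h] at this
      omega
    have ho : Odd (q : ℤ) := by exact_mod_cast hodd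
    rw [pow_mul]
    have := Int.sq_mod_four_eq_one_of_odd ho
    have h5 : (4 : ℤ) ∣ (q : ℤ) ^ 2 - 1 := by omega
    exact h5.trans (sub_one_dvd_pow_sub_one _ _)

theorem finite_intersection_of_dimH_lt_one (q : ℕ) (hq : 3 ≤ q) (A : Finset ℚ)
    (hA : 2 ≤ A.card) (hdim : dimH (Kset q A) < 1) :
    ∀ p : ℕ, 2 ≤ p → Nat.Coprime p q → (Dset p ∩ Kset q A).Finite := by
  intro p hp hpq
  have hne : A.Nonempty := Finset.card_pos.1 (by omega)
  have hK := aux_compact q hq A hne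
  have hv : volume (Kset q A) = 0 := by
    rw [← hausdorffMeasure_real]
    exact_mod_cast hausdorffMeasure_of_dimH_lt (d := 1) (by exact_mod_cast hdim)
  obtain ⟨d, hd, hdA⟩ := aux_den A
  obtain ⟨r, hr2, hrp, hr4⟩ := aux_Q p q hp hq hpq
  obtain ⟨c, hc⟩ : ∃ c, q ^ r = c + 1 := ⟨q ^ r - 1, by omega⟩
  have hc0 : 0 < c := by omega
  have hcZ : (q : ℤ) ^ r - 1 = c := by
    have : ((q ^ r : ℕ) : ℤ) = c + 1 := by rw [hc]; push_cast; ring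
    push_cast at this
    linarith
  obtain ⟨N0, hN0⟩ := aux_sep _ hK hv d (2 * c) hd (by omega)
  have key : ∀ x ∈ Dset p ∩ Kset q A, ∃ N : ℕ, 0 < N ∧ N ≤ N0 + 2 * c ∧
      ∃ m : ℤ, x = (m : ℝ) / (d * N) := by
    rintro x ⟨⟨n, -, m, hm⟩, hxK⟩
    have hp0 : (p : ℝ) ≠ 0 := by positivity
    set y : ℚ := Rat.divInt (d * m) ((p ^ n : ℕ) : ℤ) with hy
    have hyx : (y : ℝ) = d * x := by
      rw [hy, Rat.divInt_eq_div, hm]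
      push_cast
      ring
    have hNd : y.den ∣ p ^ n := by
      have := Rat.den_dvd (d * m) ((p ^ n : ℕ) : ℤ)
      exact_mod_cast this
    have hN := y.den_pos
    set N := y.den with hNdef
    have hd' : (0 : ℝ) < d := by positivity
    have hN' : (0 : ℝ) < N := by positivity
    have hnum : (y.num : ℝ) = d * x * N := by
      rw [← hyx]
      have : (y * y.den : ℚ) = y.num := Rat.mul_den_eq_num y
      exact_mod_cast this.symm
    have hcop : IsCoprime (N : ℤ) y.num := by
      rw [Int.isCoprime_iff_nat_coprime]
      simpa using y.reduced.symm
    refine ⟨N, hN, ?_, y.num, ?_⟩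
    swap
    · rw [hnum]; field_simp
    by_contra hbig
    push Not at hbig
    have horb : ∀ j : ℕ, ∃ z : ℤ, (z : ℝ) / (d * N) ∈ Kset q A ∧
        (N : ℤ) ∣ ((q : ℤ) ^ r) ^ j * y.num - z := by
      intro j
      obtain ⟨w, hw, k, hk⟩ := aux_orbit q hq A d hdA x hxK (r * j)
      refine ⟨((q : ℤ) ^ r) ^ j * y.num - k * N, ?_, ⟨k, by ring⟩⟩
      convert hw using 1
      push_cast
      rw [hnum, ← hk, pow_mul]
      field_simp
      ring
    choose z hzK hz using horb
    have hinj : Set.InjOn z (Finset.range (N / c) : Set ℕ) := by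
      have main : ∀ i j : ℕ, i < j → j < N / c → z i ≠ z j := by
        intro i j hij hj he
        obtain ⟨k, rfl⟩ := Nat.exists_eq_add_of_lt hij
        have h1 : (N : ℤ) ∣ ((q : ℤ) ^ r) ^ i * y.num * (((q : ℤ) ^ r) ^ (k + 1) - 1) := by
          have := dvd_sub (hz (i + k + 1)) (hz i)
          rw [he] at this
          have e : ∀ (B Y Z : ℤ), B ^ i * Y * (B ^ (k + 1) - 1) =
              B ^ (i + k + 1) * Y - Z - (B ^ i * Y - Z) := by
            intro B Y Z
            ring
          rw [e _ _ (z (i + k + 1))]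
          exact this
        have hcq : IsCoprime (N : ℤ) (((q : ℤ) ^ r) ^ i) := by
          have h3 : Nat.Coprime N q := Nat.Coprime.of_dvd_left hNd (Nat.Coprime.pow_left n hpq)
          exact ((Nat.isCoprime_iff_coprime.2 h3).pow_right).pow_right
        have h2 := (hcq.mul_right hcop).dvd_of_dvd_mul_left h1
        have h3 := aux_dvd p N n (k + 1) _ hrp hr4 hNd h2
        rw [hcZ] at h3
        have h4 : N ∣ c * (k + 1) := by exact_mod_cast h3
        have h5 := Nat.le_of_dvd (by positivity) h4
        have h6 : c * (N / c) ≤ N := Nat.mul_div_le N c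
        have h7 : c * (k + 1) < c * (N / c) := Nat.mul_lt_mul_of_pos_left (by omega) hc0
        omega
      intro i hi j hj he
      simp only [Finset.coe_range, Set.mem_Iio] at hi hj
      rcases lt_trichotomy i j with h | h | h
      · exact absurd he (main i j h hj)
      · exact h
      · exact absurd he.symm (main j i h hi)
    have hfin := hN0 N (by omega) hN ((Finset.range (N / c)).image z) (by
      intro w hw
      obtain ⟨j, -, rfl⟩ := Finset.mem_image.1 hw
      exact hzK j)
    rw [Finset.card_image_of_injOn hinj, Finset.card_range] at hfin
    have h8 := Nat.div_add_mod N c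
    have h9 := Nat.mod_lt N hc0
    have h10 : 2 * c * (N / c) = 2 * (c * (N / c)) := by ring
    omega
  obtain ⟨R, hR⟩ := hK.isBounded.exists_norm_le
  set M := N0 + 2 * c with hM
  have hfin : ((fun t : ℤ × ℕ => (t.1 : ℝ) / (d * t.2)) ''
      ((Set.Icc (-⌈R * (d * M)⌉) ⌈R * (d * M)⌉) ×ˢ (Set.Iic M))).Finite :=
    ((Set.finite_Icc _ _).prod (Set.finite_Iic _)).image _
  refine hfin.subset fun x hx => ?_
  obtain ⟨N, hN, hNM, m, hm⟩ := key x hx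
  refine ⟨(m, N), ⟨?_, hNM⟩, hm.symm⟩
  have hxR := hR x hx.2
  have hdN : (0 : ℝ) < d * N := by positivity
  have hmx : (m : ℝ) = x * (d * N) := by rw [hm]; field_simp
  have habs : |(m : ℝ)| ≤ R * (d * M) := by
    rw [hmx, abs_mul, abs_of_pos hdN]
    refine mul_le_mul hxR ?_ hdN.le ((norm_nonneg _).trans hxR)
    have : (N : ℝ) ≤ M := by exact_mod_cast hNM
    gcongr
  have h1 := (abs_le.1 habs)
  have h2 := Int.le_ceil (R * (d * M))
  constructor
  · have : ((-⌈R * (d * M)⌉ : ℤ) : ℝ) ≤ m := by push_cast; linarith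
    exact_mod_cast this
  · have : (m : ℝ) ≤ (⌈R * (d * M)⌉ : ℤ) := by linarith
    exact_mod_cast this
end

section
/- Let q be an integer with q ≥ 3 and let A ⊂ ℚ be a finite set with #A ≥ 2 such that the Hausdorff dimension of K(q,A) is strictly less than 1. Then for every rational r ≠ 0, every rational α, and every integer p ≥ 2 with gcd(p,q) = 1, the intersection (r·D_p + α) ∩ K(q,A) is a finite set. -/
open MeasureTheory

lemma order_bound (p q : ℕ) (hq : 3 ≤ q) (hp : 2 ≤ p) (hpq : Nat.Coprime p q) :
    ∃ L : ℕ, 0 < L ∧ ∀ N n k : ℕ, N ∣ p ^ n → 0 < k → N ∣ q ^ k - 1 → N ≤ L * k := by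
  set Q := q ^ p.totient with hQ
  have htot : 0 < p.totient := Nat.totient_pos.2 (by omega)
  have hQ3 : 3 ≤ Q := le_trans hq (Nat.le_self_pow htot.ne' q)
  have hpQ : p ∣ Q - 1 := by
    have h := Nat.ModEq.pow_totient hpq.symm
    exact (Nat.modEq_iff_dvd' (by omega)).1 h.symm
  refine ⟨(Q+1)*(Q-1), Nat.mul_pos (by omega) (by omega), ?_⟩
  intro N n k hN hk hd
  have hL : (Q+1)*(Q-1)*k ≠ 0 := by
    have : Q - 1 ≠ 0 := by omega
    positivity
  apply Nat.le_of_dvd (Nat.pos_of_ne_zero hL)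
  rw [Nat.dvd_iff_prime_pow_dvd_dvd]
  intro l j hl hlj
  rcases Nat.eq_zero_or_pos j with rfl | hj
  · simp
  have : Fact l.Prime := ⟨hl⟩
  have hlN : l ∣ N := (dvd_pow_self l hj.ne').trans hlj
  have hlp : l ∣ p := hl.dvd_of_dvd_pow (hlN.trans hN)
  have hlQ : l ∣ Q - 1 := hlp.trans hpQ
  have hlnQ : ¬ l ∣ Q := by
    intro h
    have := hl.dvd_of_dvd_pow h
    have h2 := Nat.dvd_gcd hlp this
    rw [hpq] at h2
    exact hl.one_lt.ne' (Nat.dvd_one.1 h2)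
  have hjQ : l ^ j ∣ Q ^ (2*k) - 1 := by
    refine (hlj.trans hd).trans ?_
    have := Nat.sub_dvd_pow_sub_pow (q^k) 1 (p.totient * 2)
    rw [one_pow, ← pow_mul] at this
    have e : Q ^ (2*k) = q ^ (k * (p.totient * 2)) := by
      rw [hQ, ← pow_mul]; ring_nf
    rw [e]; exact this
  have hne : Q ^ (2*k) - 1 ≠ 0 := by
    have : 1 < Q ^ (2*k) := Nat.one_lt_pow (by omega) (by omega)
    omega
  rw [padicValNat_dvd_iff_le hL]
  rw [padicValNat_dvd_iff_le hne] at hjQ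
  have hQ1 : Q - 1 ≠ 0 := by omega
  rw [padicValNat.mul (by positivity) hk.ne', padicValNat.mul (by positivity) hQ1]
  rcases hl.eq_two_or_odd' with h2 | hodd
  · subst h2
    have := padicValNat.pow_two_sub_pow (x := Q) (y := 1) (by omega) (by simpa using hlQ) hlnQ (n := 2*k) (by omega) (by simp)
    rw [one_pow, padicValNat.mul (by norm_num) hk.ne', padicValNat_self] at this
    omega
  · have := padicValNat.pow_sub_pow (x := Q) (y := 1) (p := l) hodd (by omega) hlQ hlnQ (n := 2*k) (by omega)
    rw [one_pow, padicValNat.mul (by norm_num) hk.ne'] at this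
    have h0 : padicValNat l 2 = 0 := by
      apply padicValNat.eq_zero_of_not_dvd
      intro h
      have := (Nat.prime_dvd_prime_iff_eq hl Nat.prime_two).1 h
      subst this
      exact absurd hodd (by decide)
    omega

lemma term_bound (q : ℕ) (hq : 3 ≤ q) (A : Finset ℚ) :
    ∃ u : ℕ → ℝ, Summable u ∧ ∀ a ∈ A, ∀ i : ℕ, ‖(a : ℝ) / (q : ℝ) ^ (i + 1)‖ ≤ u i := by
  have hq' : (3:ℝ) ≤ q := by exact_mod_cast hq
  refine ⟨fun i => (∑ a ∈ A, |(a:ℝ)|) * ((q:ℝ)⁻¹) ^ (i+1), ?_, ?_⟩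
  · apply Summable.mul_left
    rw [summable_nat_add_iff (f := fun i => ((q:ℝ)⁻¹) ^ i)]
    exact summable_geometric_of_lt_one (by positivity) (inv_lt_one_of_one_lt₀ (by linarith))
  · intro a ha i
    have h1 : |(a:ℝ)| ≤ ∑ a ∈ A, |(a:ℝ)| :=
      Finset.single_le_sum (f := fun a : ℚ => |(a:ℝ)|) (fun _ _ => abs_nonneg _) ha
    have h2 : ‖(a : ℝ) / (q : ℝ) ^ (i + 1)‖ = |(a:ℝ)| * ((q:ℝ)⁻¹) ^ (i+1) := by
      rw [Real.norm_eq_abs, abs_div, abs_of_pos (show (0:ℝ) < (q:ℝ)^(i+1) by positivity), inv_pow,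
        div_eq_mul_inv]
    rw [h2]
    exact mul_le_mul_of_nonneg_right h1 (by positivity)

lemma Kset_orbit (q : ℕ) (hq : 3 ≤ q) (A : Finset ℚ) (x : ℝ) (hx : x ∈ Kset q A) :
    ∃ t : ℕ → ℝ, t 0 = x ∧ (∀ k, t k ∈ Kset q A) ∧
      ∀ k, ∃ a ∈ A, t (k+1) = q * t k - (a:ℝ) := by
  obtain ⟨u, hu, hb⟩ := term_bound q hq A
  obtain ⟨a, ha, rfl⟩ := hx
  have hq' : (q:ℝ) ≠ 0 := by
    have : q ≠ 0 := by omega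
    exact_mod_cast this
  refine ⟨fun k => ∑' i : ℕ, (a (i+k) : ℝ) / (q : ℝ) ^ (i + 1), by simp,
    fun k => ⟨fun i => a (i+k), fun i => ha _, rfl⟩, fun k => ⟨a k, ha k, ?_⟩⟩
  have hs : Summable (fun i : ℕ => (a (i+k) : ℝ) / (q : ℝ) ^ (i + 1)) :=
    Summable.of_norm_bounded hu (fun i => hb _ (ha _) i)
  show _ = (q:ℝ) * (∑' i : ℕ, (a (i+k) : ℝ) / (q : ℝ) ^ (i + 1)) - _
  rw [hs.tsum_eq_zero_add, mul_add, ← tsum_mul_left]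
  have e : ∀ i : ℕ, (q:ℝ) * ((a (i+1+k) : ℝ) / (q : ℝ) ^ (i + 1 + 1)) = (a (i+(k+1)) : ℝ) / (q : ℝ) ^ (i + 1) := by
    intro i
    rw [show i+1+k = i+(k+1) by ring, pow_succ (q:ℝ) (i+1)]
    field_simp
  simp only [e]
  simp
  field_simp
  ring

lemma int_orbit (q : ℕ) (A : Finset ℚ) (M : ℕ) (hM : 0 < M)
    (hMA : ∀ a ∈ A, ∃ z : ℤ, (M:ℝ) * (a:ℝ) = z) (N : ℕ) (hN : 0 < N) (t : ℕ → ℝ) (m : ℤ)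
    (h0 : M * N * t 0 = m) (ht : ∀ k, ∃ a ∈ A, t (k+1) = q * t k - (a:ℝ)) (k : ℕ) :
    ∃ y : ℤ, M * N * t k = y ∧ (N:ℤ) ∣ y - q^k * m := by
  induction k with
  | zero => exact ⟨m, h0, by simp⟩
  | succ k ih =>
    obtain ⟨y, hy, hd⟩ := ih
    obtain ⟨a, ha, hta⟩ := ht k
    obtain ⟨z, hz⟩ := hMA a ha
    refine ⟨q * y - N * z, ?_, ?_⟩
    · push_cast
      rw [← hy, ← hz, hta]; ring
    · obtain ⟨w, hw⟩ := hd
      refine ⟨q * w - z, ?_⟩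
      have : y = N * w + q^k*m := by linarith
      rw [this]; ring

lemma den_bound (q : ℕ) (hq : 3 ≤ q) (A : Finset ℚ) (hdim : dimH (Kset q A) < 1)
    (p : ℕ) (hp : 2 ≤ p) (hpq : Nat.Coprime p q) (M : ℕ) (hM : 0 < M)
    (hMA : ∀ a ∈ A, ∃ z : ℤ, (M:ℝ) * (a:ℝ) = z) :
    ∃ B : ℕ, ∀ (N n : ℕ) (m : ℤ) (x : ℝ), N ∣ p ^ n → IsCoprime m (N:ℤ) → x ∈ Kset q A →
      M * N * x = m → N ≤ B := by
  obtain ⟨L, hL, hord⟩ := order_bound p q hq hp hpq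
  have hvol : volume (Kset q A) = 0 := by
    rw [← hausdorffMeasure_real]
    have := hausdorffMeasure_of_dimH_lt (s := Kset q A) (d := 1) (by simpa using hdim)
    simpa using this
  have hten := tendsto_measure_cthickening_of_isCompact (μ := volume) (Kset_compact q hq A)
  rw [hvol] at hten
  have hM' : (0:ℝ) < M := by exact_mod_cast hM
  have hL' : (0:ℝ) < L := by exact_mod_cast hL
  have hc : (0:ℝ) < 1 / (2 * L * M) := by positivity
  have hev := hten.eventually (gt_mem_nhds (ENNReal.ofReal_pos.2 hc))
  rw [Metric.eventually_nhds_iff] at hev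
  obtain ⟨δ, hδ, hev⟩ := hev
  obtain ⟨B, hB⟩ := exists_nat_gt (1/δ)
  refine ⟨B + L, ?_⟩
  intro N n m x hNp hcop hx hxm
  by_contra hcon
  push Not at hcon
  have hN : 0 < N := by omega
  have hN' : (0:ℝ) < N := by exact_mod_cast hN
  obtain ⟨t, ht0, htK, htr⟩ := Kset_orbit q hq A x hx
  choose y hy hyd using int_orbit q A M hM hMA N hN t m (by rw [ht0]; exact hxm) htr
  have hNq : IsCoprime (N:ℤ) (q:ℤ) := by
    rw [Nat.isCoprime_iff_coprime]
    exact Nat.Coprime.coprime_dvd_left hNp (Nat.Coprime.pow_left n hpq)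
  have hinj : ∀ i j : ℕ, i < j → j < N / L → y i ≠ y j := by
    intro i j hij hj he
    have h1 : (N:ℤ) ∣ (q^i * m) * (q^(j-i) - 1) := by
      have := dvd_sub (hyd i) (hyd j)
      rw [he] at this
      have e : (q:ℤ)^j = q^i * q^(j-i) := by rw [← pow_add]; congr 1; omega
      rw [e] at this
      have e2 : (q:ℤ)^i * m * (q^(j-i) - 1) = y j - q^i * m - (y j - q^i * q^(j-i) * m) := by ring
      rw [e2]; exact this
    have h2 : (N:ℤ) ∣ (q:ℤ)^(j-i) - 1 :=
      (IsCoprime.mul_right (hNq.pow_right) hcop.symm).dvd_of_dvd_mul_left h1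
    have h3 : N ∣ q^(j-i) - 1 := by
      have h1q : 1 ≤ q^(j-i) := Nat.one_le_pow _ _ (by omega)
      zify [h1q]; exact h2
    have h4 := hord N n (j-i) hNp (by omega) h3
    have h5 : L * (j-i) < L * (N/L) := Nat.mul_lt_mul_of_pos_left (by omega) hL
    have h6 := Nat.mul_div_le N L
    omega
  set ε : ℝ := 1 / (2 * M * N) with hε
  have hεpos : 0 < ε := by positivity
  have hte : ∀ k, t k = 2 * ε * y k := by
    intro k
    rw [← hy k, hε]; field_simp
  have hdisj : (↑(Finset.range (N/L)) : Set ℕ).PairwiseDisjoint (fun k => Metric.ball (t k) ε) := by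
    have key : ∀ i j : ℕ, i < j → j < N / L → Disjoint (Metric.ball (t i) ε) (Metric.ball (t j) ε) := by
      intro i j hij hj
      apply Metric.ball_disjoint_ball
      rw [Real.dist_eq, hte i, hte j, ← mul_sub, abs_mul, abs_of_pos (by positivity : 0 < 2*ε)]
      have h1 : (1:ℝ) ≤ |(y i:ℝ) - y j| := by
        have : (1:ℤ) ≤ |y i - y j| := Int.one_le_abs (sub_ne_zero.2 (hinj i j hij hj))
        exact_mod_cast this
      nlinarith
    intro i hi j hj hne
    simp only [Finset.coe_range, Set.mem_Iio] at hi hj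
    rcases lt_or_gt_of_ne hne with h | h
    · exact key i j h hj
    · exact (key j i h hi).symm
  have hmeas := measure_biUnion_finset (μ := volume) hdisj (fun b _ => Metric.isOpen_ball.measurableSet)
  have hsub : (⋃ k ∈ Finset.range (N/L), Metric.ball (t k) ε) ⊆ Metric.cthickening ε (Kset q A) := by
    refine Set.iUnion₂_subset fun k _ => ?_
    exact Metric.ball_subset_closedBall.trans (Metric.closedBall_subset_cthickening (htK k) ε)
  have hle := measure_mono (μ := volume) hsub
  rw [hmeas] at hle
  simp only [Real.volume_ball, Finset.sum_const, Finset.card_range, nsmul_eq_mul] at hle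
  have hεδ : ε < δ := by
    have h1 : (B:ℝ) < N := by exact_mod_cast (by omega : B < N)
    have h2 : 1/δ < N := hB.trans h1
    have h3 : 1 < N * δ := by rwa [div_lt_iff₀ hδ] at h2
    rw [hε, div_lt_iff₀ (by positivity)]
    have : (1:ℝ) ≤ M := by exact_mod_cast hM
    nlinarith
  have hlt := lt_of_le_of_lt hle (hev (y := ε) (by rw [Real.dist_eq, sub_zero, abs_of_pos hεpos]; exact hεδ))
  rw [← ENNReal.ofReal_natCast, ← ENNReal.ofReal_mul (by positivity),
    ENNReal.ofReal_lt_ofReal_iff hc] at hlt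
  have h7 : N < 2 * L * (N/L) := by
    have h8 := Nat.div_add_mod N L
    have h9 := Nat.mod_lt N hL
    have h10 : 1 ≤ N / L := (Nat.one_le_div_iff hL).2 (by omega)
    nlinarith
  have h7' : (N:ℝ) < 2 * L * ((N/L : ℕ):ℝ) := by exact_mod_cast h7
  have : ((N/L : ℕ):ℝ) * (2 * ε) = ((N/L : ℕ):ℝ) / (M * N) := by rw [hε]; field_simp
  rw [this, div_lt_div_iff₀ (by positivity) (by positivity)] at hlt
  nlinarith

lemma clear_den (r : ℚ) (M : ℕ) (h : r.den ∣ M) : ∃ z : ℤ, (M:ℝ) * (r:ℝ) = z := by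
  obtain ⟨c, rfl⟩ := h
  refine ⟨c * r.num, ?_⟩
  have h1 : ((r.den : ℚ)) * r = r.num := by rw [mul_comm]; exact Rat.mul_den_eq_num r
  have h2 : ((r.den : ℝ)) * (r:ℝ) = r.num := by exact_mod_cast congrArg (fun x : ℚ => (x:ℝ)) h1
  push_cast
  rw [← h2]; ring

theorem finite_intersection_affine_image (q : ℕ) (hq : 3 ≤ q) (A : Finset ℚ)
    (hA : 2 ≤ A.card) (hdim : dimH (Kset q A) < 1)
    (r : ℚ) (hr : r ≠ 0) (α : ℚ) (p : ℕ) (hp : 2 ≤ p) (hpq : Nat.Coprime p q) :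
    (((fun x : ℝ => (r : ℝ) * x + (α : ℝ)) '' Dset p) ∩ Kset q A).Finite := by
  set M : ℕ := r.den * α.den * ∏ a ∈ A, a.den with hMdef
  have hM : 0 < M := by
    have : 0 < ∏ a ∈ A, a.den := Finset.prod_pos fun a _ => a.den_pos
    have := r.den_pos
    have := α.den_pos
    positivity
  have hMA : ∀ a ∈ A, ∃ z : ℤ, (M:ℝ) * (a:ℝ) = z := fun a ha =>
    clear_den a M ((Finset.dvd_prod_of_mem (fun a : ℚ => a.den) ha).trans (Dvd.intro_left _ rfl))
  obtain ⟨zr, hzr⟩ := clear_den r M ⟨α.den * ∏ a ∈ A, a.den, by rw [hMdef]; ring⟩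
  obtain ⟨za, hza⟩ := clear_den α M ⟨r.den * ∏ a ∈ A, a.den, by rw [hMdef]; ring⟩
  obtain ⟨B, hB⟩ := den_bound q hq A hdim p hp hpq M hM hMA
  obtain ⟨R, hR⟩ := (Kset_compact q hq A).isBounded.exists_norm_le
  set F : ℕ := M * B.factorial with hF
  have hFpos : (0:ℝ) < F := by
    have : 0 < F := Nat.mul_pos hM (Nat.factorial_pos B)
    exact_mod_cast this
  obtain ⟨W, hW⟩ := exists_nat_gt (F * R)
  apply ((Set.finite_Icc (-(W:ℤ)) W).image (fun z : ℤ => (z:ℝ) / F)).subset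
  rintro x ⟨⟨d, ⟨n, -, m, rfl⟩, hd⟩, hxK⟩
  have hp' : (p:ℝ) ≠ 0 := by
    have : p ≠ 0 := by omega
    exact_mod_cast this
  set ρ : ℚ := Rat.divInt (zr * m + za * p ^ n) ((p ^ n : ℕ) : ℤ) with hρ
  have hρx : (M:ℝ) * x = (ρ:ℝ) := by
    rw [hρ, Rat.divInt_eq_div]
    push_cast
    rw [← hd, ← hzr, ← hza]
    field_simp
  have hden : ρ.den ∣ p ^ n := by
    have := Rat.den_dvd (zr * m + za * p ^ n) ((p ^ n : ℕ) : ℤ)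
    exact_mod_cast this
  have hρ2 : (ρ:ℝ) * ρ.den = ρ.num := by
    exact_mod_cast congrArg (fun x : ℚ => (x:ℝ)) (Rat.mul_den_eq_num ρ)
  have hle : ρ.den ≤ B := hB ρ.den n ρ.num x hden (Rat.isCoprime_num_den ρ) hxK (by
    rw [← hρ2, ← hρx]; ring)
  obtain ⟨c, hc⟩ := Nat.dvd_factorial ρ.den_pos hle
  have hFx : (F:ℝ) * x = ((c * ρ.num : ℤ) : ℝ) := by
    rw [hF, hc]; push_cast
    rw [← hρ2, ← hρx]; ring
  refine ⟨c * ρ.num, ?_, ?_⟩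
  · have h1 : |(F:ℝ) * x| ≤ W := by
      rw [abs_mul, abs_of_pos hFpos]
      have := hR x hxK
      rw [Real.norm_eq_abs] at this
      nlinarith
    rw [hFx] at h1
    have h2 : |(c * ρ.num : ℤ)| ≤ (W:ℤ) := by exact_mod_cast h1
    exact abs_le.1 h2
  · show ((c * ρ.num : ℤ) : ℝ) / F = x
    rw [← hFx]; field_simp
end

section
/- Let p ≥ 2 and q ≥ 3 be integers with gcd(p,q) = 1, and let A = {0, 1, …, q−2, q} (the integers 0 through q−2 together with q). Then the intersection D_p ∩ K(q,A) is a finite set. -/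
open MeasureTheory

theorem aux_pow (x : ℤ) (n : ℕ) : ∃ w : ℤ, (1 + x) ^ n = 1 + n * x + x ^ 2 * w := by
  induction n with
  | zero => exact ⟨0, by simp⟩
  | succ n ih =>
    obtain ⟨w, hw⟩ := ih
    refine ⟨w + n + x * w, ?_⟩
    rw [pow_succ, hw]; push_cast; ring

theorem aux_A (p : ℕ) (R : ℤ) (h : (p : ℤ) ^ 2 ∣ R) (j : ℕ) :
    ∃ z : ℤ, (1 + R) ^ (p ^ j) = 1 + R * (p : ℤ) ^ j * (1 + p * z) := by
  obtain ⟨c, hc⟩ := h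
  induction j with
  | zero => exact ⟨0, by simp⟩
  | succ j ih =>
    obtain ⟨z, hz⟩ := ih
    rw [pow_succ p j, pow_mul, hz]
    obtain ⟨w, hw⟩ := aux_pow (R * (p : ℤ) ^ j * (1 + p * z)) p
    rw [hw]
    refine ⟨z + (1 + p * z) ^ 2 * c * p ^ j * w, ?_⟩
    have : (R * (p : ℤ) ^ j * (1 + p * z)) ^ 2 * w
      = R * (p:ℤ) ^ j * (1 + p * z) ^ 2 * (p ^ 2 * c) * p ^ j * w := by rw [← hc]; ring
    rw [this]; ring

theorem aux_B (p : ℕ) (hp : 2 ≤ p) (R : ℤ) (h : (p : ℤ) ^ 2 ∣ R) (t : ℤ) (j : ℕ) :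
    ∃ k : ℕ, R * (p : ℤ) ^ j ∣ (1 + R) ^ k - (1 + R * t) := by
  have h0 := h
  obtain ⟨c, hc⟩ := h
  induction j with
  | zero =>
    refine ⟨0, -t, ?_⟩
    simp
  | succ j ih =>
    obtain ⟨k, w', hk⟩ := ih
    obtain ⟨z, hz⟩ := aux_A p R h0 j
    have hk' : (1 + R) ^ k = 1 + R * t + R * (p : ℤ) ^ j * w' := by linarith
    obtain ⟨u, v, hu⟩ : ∃ u : ℕ, (p : ℤ) ∣ w' + u := by
      have hp0 : (p : ℤ) ≠ 0 := by positivity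
      refine ⟨((-w') % p).toNat, ?_⟩
      rw [Int.toNat_of_nonneg (Int.emod_nonneg _ hp0)]
      refine ⟨-((-w') / p), ?_⟩
      have := Int.emod_add_mul_ediv (-w') p
      linarith
    obtain ⟨w, hw⟩ := aux_pow (R * (p : ℤ) ^ j * (1 + p * z)) u
    refine ⟨k + p ^ j * u, ?_⟩
    rw [pow_add (1 + R) k, pow_mul, hz, hw, hk']
    have hw2 : w' = p * v - u := by linarith
    refine ⟨v + u * z + p * c * (t + p ^ j * w') * u * (1 + p * z) +
      (1 + R * t + R * (p : ℤ) ^ j * w') * p * c * p ^ j * (1 + p * z) ^ 2 * w, ?_⟩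
    have e1 : R ^ 2 = R * (p ^ 2 * c) := by rw [← hc]; ring
    rw [hw2] at *
    linear_combination ((p : ℤ) ^ j * (t + p ^ j * (p * v - u)) * u * (1 + p * z) +
      (1 + R * t + R * (p : ℤ) ^ j * (p * v - u)) * (p ^ j) ^ 2 * (1 + p * z) ^ 2 * w) * e1

section
variable {q : ℕ} {A : Finset ℚ}

theorem K_term (hq : 3 ≤ q) (hA : ∀ a ∈ A, ∃ n : ℕ, a = n ∧ n ≤ q) (a : ℕ → ℚ)
    (ha : ∀ i, a i ∈ A) (i : ℕ) :
    0 ≤ (a i : ℝ) / (q : ℝ) ^ (i + 1) ∧ (a i : ℝ) / (q : ℝ) ^ (i + 1) ≤ ((q : ℝ)⁻¹) ^ i := by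
  obtain ⟨n, hn, hnq⟩ := hA _ (ha i)
  have hq0 : (0 : ℝ) < q := by positivity
  rw [hn]
  constructor
  · positivity
  · rw [inv_pow, div_le_iff₀ (by positivity), pow_succ]
    have : (n : ℝ) ≤ q := by exact_mod_cast hnq
    field_simp
    simpa using this

theorem geo_summable (hq : 3 ≤ q) : Summable (fun i : ℕ => ((q : ℝ)⁻¹) ^ i) := by
  have : (3 : ℝ) ≤ q := by exact_mod_cast hq
  exact summable_geometric_of_lt_one (by positivity) (inv_lt_one_of_one_lt₀ (by linarith))

theorem K_summable (hq : 3 ≤ q) (hA : ∀ a ∈ A, ∃ n : ℕ, a = n ∧ n ≤ q) (a : ℕ → ℚ)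
    (ha : ∀ i, a i ∈ A) : Summable (fun i : ℕ => (a i : ℝ) / (q : ℝ) ^ (i + 1)) :=
  Summable.of_nonneg_of_le (fun i => (K_term hq hA a ha i).1)
    (fun i => (K_term hq hA a ha i).2) (geo_summable hq)

theorem K_bound (hq : 3 ≤ q) (hA : ∀ a ∈ A, ∃ n : ℕ, a = n ∧ n ≤ q) (x : ℝ)
    (hx : x ∈ Kset q A) : 0 ≤ x ∧ x < 2 := by
  obtain ⟨a, ha, rfl⟩ := hx
  have h3 : (3 : ℝ) ≤ q := by exact_mod_cast hq
  refine ⟨tsum_nonneg fun i => (K_term hq hA a ha i).1, ?_⟩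
  refine lt_of_le_of_lt ((K_summable hq hA a ha).tsum_le_tsum
    (fun i => (K_term hq hA a ha i).2) (geo_summable hq)) ?_
  have hi : (q : ℝ)⁻¹ ≤ 3⁻¹ := by gcongr
  rw [tsum_geometric_of_lt_one (by positivity) (by linarith [show (3:ℝ)⁻¹ < 1 by norm_num])]
  rw [inv_lt_comm₀ (by linarith [show (3:ℝ)⁻¹ < 1 by norm_num]) (by norm_num)]
  norm_num at hi ⊢
  linarith

theorem K_shift (hq : 3 ≤ q) (hA : ∀ a ∈ A, ∃ n : ℕ, a = n ∧ n ≤ q) (x : ℝ)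
    (hx : x ∈ Kset q A) : ∃ a ∈ A, ∃ y ∈ Kset q A, x = (y + (a : ℝ)) / q := by
  obtain ⟨a, ha, rfl⟩ := hx
  have hq0 : (q : ℝ) ≠ 0 := by positivity
  refine ⟨a 0, ha 0, _, ⟨fun i => a (i + 1), fun i => ha _, rfl⟩, ?_⟩
  rw [(K_summable hq hA a ha).tsum_eq_zero_add]
  have : ∀ i : ℕ, (a (i + 1) : ℝ) / (q : ℝ) ^ (i + 1 + 1)
      = (a (i + 1) : ℝ) / (q : ℝ) ^ (i + 1) * (q : ℝ)⁻¹ := by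
    intro i; rw [pow_succ _ (i + 1)]; field_simp
  simp_rw [this]
  rw [tsum_mul_right]
  simp only [zero_add, pow_one]
  field_simp
  ring

theorem K_compact (hq : 3 ≤ q) (hA : ∀ a ∈ A, ∃ n : ℕ, a = n ∧ n ≤ q) :
    IsCompact (Kset q A) := by
  have : Kset q A = Set.range
      (fun a : ℕ → A => ∑' i : ℕ, (((a i : ℚ)) : ℝ) / (q : ℝ) ^ (i + 1)) := by
    ext x
    constructor
    · rintro ⟨a, ha, rfl⟩
      exact ⟨fun i => ⟨a i, ha i⟩, rfl⟩
    · rintro ⟨a, rfl⟩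
      exact ⟨fun i => a i, fun i => (a i).2, rfl⟩
  rw [this]
  apply isCompact_range
  refine continuous_tsum (u := fun i : ℕ => ((q : ℝ)⁻¹) ^ i) ?_ (geo_summable hq) ?_
  · intro i
    refine Continuous.div_const ?_ _
    exact Rat.continuous_coe_real.comp (continuous_subtype_val.comp (continuous_apply i))
  · intro i a
    have := K_term hq hA (fun i => a i) (fun i => (a i).2) i
    rw [Real.norm_eq_abs, abs_of_nonneg this.1]
    exact this.2

theorem K_null (hq : 3 ≤ q) (hA : ∀ a ∈ A, ∃ n : ℕ, a = n ∧ n ≤ q)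
    (hc : A.card ≤ q) (h0 : (0 : ℚ) ∈ A) (h1 : (1 : ℚ) ∈ A) (h2 : (q : ℚ) ∈ A) :
    volume (Kset q A) = 0 := by
  classical
  have hq0 : (q : ℝ) ≠ 0 := by positivity
  set W : Finset ℚ := (A ×ˢ A).image (fun ab => ab.1 * q + ab.2) with hW
  have hWc : W.card < q ^ 2 := by
    have hle : W.card ≤ (A ×ˢ A).card := Finset.card_image_le
    have hne : W.card ≠ (A ×ˢ A).card := by
      intro h
      have hinj := Finset.card_image_iff.mp h
      have := @hinj (0, (q : ℚ)) (by simp [h0, h2]) (1, 0) (by simp [h0, h1]) (by simp)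
      simp at this
    have : (A ×ˢ A).card ≤ q ^ 2 := by
      rw [Finset.card_product, sq]; exact Nat.mul_le_mul hc hc
    omega
  have hsub : Kset q A ⊆ ⋃ w ∈ W,
      ((fun x : ℝ => (q : ℝ) ^ 2 * x) ⁻¹' ((fun x : ℝ => x + (-(w : ℝ))) ⁻¹' Kset q A)) := by
    intro x hx
    obtain ⟨a, ha, y, hy, rfl⟩ := K_shift hq hA x hx
    obtain ⟨b, hb, z, hz, rfl⟩ := K_shift hq hA y hy
    simp only [Set.mem_iUnion, Set.mem_preimage]
    refine ⟨a * q + b, ?_, ?_⟩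
    · rw [hW, Finset.mem_image]
      exact ⟨(a, b), by simp [ha, hb], rfl⟩
    · convert hz using 1
      push_cast
      field_simp
      ring
  have hfin : volume (Kset q A) ≠ ⊤ := (K_compact hq hA).measure_lt_top.ne
  have hle : volume (Kset q A) ≤
      (W.card : ENNReal) * (ENNReal.ofReal |((q : ℝ) ^ 2)⁻¹| * volume (Kset q A)) := by
    refine (measure_mono hsub).trans ((measure_biUnion_finset_le _ _).trans ?_)
    have : ∀ w ∈ W, volume ((fun x : ℝ => (q : ℝ) ^ 2 * x) ⁻¹'
        ((fun x : ℝ => x + (-(w : ℝ))) ⁻¹' Kset q A))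
        = ENNReal.ofReal |((q : ℝ) ^ 2)⁻¹| * volume (Kset q A) := by
      intro w _
      rw [Real.volume_preimage_mul_left (by positivity), measure_preimage_add_right]
    rw [Finset.sum_congr rfl this]
    simp
  have hr := ENNReal.toReal_mono (by finiteness) hle
  rw [ENNReal.toReal_mul, ENNReal.toReal_mul, ENNReal.toReal_ofReal (abs_nonneg _),
    abs_of_nonneg (by positivity), ENNReal.toReal_natCast] at hr
  have hWr : (W.card : ℝ) < (q : ℝ) ^ 2 := by exact_mod_cast hWc
  by_contra hne
  have hpos := ENNReal.toReal_pos hne hfin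
  rw [← mul_assoc] at hr
  have : (W.card : ℝ) * ((q : ℝ) ^ 2)⁻¹ < 1 := by
    rw [← div_eq_mul_inv, div_lt_one (by positivity)]; exact hWr
  nlinarith

theorem K_hole (hq : 3 ≤ q) (hA : ∀ a ∈ A, ∃ n : ℕ, a = n ∧ n ≤ q)
    (hc : A.card ≤ q) (h0 : (0 : ℚ) ∈ A) (h1 : (1 : ℚ) ∈ A) (h2 : (q : ℚ) ∈ A) :
    ∃ y ε : ℝ, 0 < ε ∧ ∀ z : ℝ, |z - y| < ε → ∀ n : ℤ, z + n ∉ Kset q A := by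
  have hcl := (K_compact hq hA).isClosed
  have hn := K_null hq hA hc h0 h1 h2
  set L : Set ℝ := Kset q A ∪ (fun x : ℝ => x + 1) ⁻¹' Kset q A with hL
  have hLc : IsClosed L := hcl.union (hcl.preimage (by fun_prop))
  have hLn : volume L = 0 := by
    rw [hL, measure_union_null_iff]
    exact ⟨hn, by rw [measure_preimage_add_right]; exact hn⟩
  obtain ⟨y, hy, hyL⟩ : ∃ y ∈ Set.Ioo (0 : ℝ) 1, y ∉ L := by
    by_contra! h
    have : volume (Set.Ioo (0 : ℝ) 1) ≤ volume L := measure_mono h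
    rw [hLn] at this
    simp at this
  have hop : IsOpen (Set.Ioo (0 : ℝ) 1 ∩ Lᶜ) := isOpen_Ioo.inter hLc.isOpen_compl
  obtain ⟨ε, hε, hb⟩ := Metric.isOpen_iff.mp hop y ⟨hy, hyL⟩
  refine ⟨y, ε, hε, fun z hz n hzn => ?_⟩
  obtain ⟨⟨hz0, hz1⟩, hzL⟩ := hb (show z ∈ Metric.ball y ε by rwa [Metric.mem_ball, Real.dist_eq])
  obtain ⟨hb0, hb1⟩ := K_bound hq hA _ hzn
  have hn0 : (-1 : ℤ) < n := by
    have : (-1 : ℝ) < n := by linarith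
    exact_mod_cast this
  have hn1 : n < 2 := by
    have : (n : ℝ) < 2 := by linarith
    exact_mod_cast this
  apply hzL
  have : n = 0 ∨ n = 1 := by omega
  rcases this with rfl | rfl
  · left; simpa using hzn
  · right; simpa using hzn

theorem K_pow (hq : 3 ≤ q) (hA : ∀ a ∈ A, ∃ n : ℕ, a = n ∧ n ≤ q) (x : ℝ)
    (hx : x ∈ Kset q A) (k : ℕ) : ∃ n : ℤ, (q : ℝ) ^ k * x + n ∈ Kset q A := by
  induction k with
  | zero => exact ⟨0, by simpa using hx⟩
  | succ k ih =>
    obtain ⟨n, hn⟩ := ih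
    obtain ⟨a, ha, y, hy, h⟩ := K_shift hq hA _ hn
    obtain ⟨b, rfl, -⟩ := hA a ha
    have hq0 : (q : ℝ) ≠ 0 := by positivity
    refine ⟨n * q - b, ?_⟩
    convert hy using 1
    rw [eq_div_iff hq0] at h
    push_cast at h ⊢
    rw [pow_succ]
    linarith
end

theorem finite_intersection_special_digit_set (p q : ℕ) (hp : 2 ≤ p) (hq : 3 ≤ q)
    (hpq : Nat.Coprime p q)
    (A : Finset ℚ) (hA : A = insert (q : ℚ) ((Finset.range (q - 1)).image (fun k : ℕ => (k : ℚ)))) :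
    (Dset p ∩ Kset q A).Finite := by
  have hA1 : ∀ a ∈ A, ∃ n : ℕ, a = n ∧ n ≤ q := by
    intro a ha
    rw [hA, Finset.mem_insert, Finset.mem_image] at ha
    rcases ha with rfl | ⟨k, hk, rfl⟩
    · exact ⟨q, rfl, le_rfl⟩
    · exact ⟨k, rfl, by have := Finset.mem_range.mp hk; omega⟩
  have hc : A.card ≤ q := by
    rw [hA]
    refine (Finset.card_insert_le _ _).trans ?_
    have := Finset.card_image_le (s := Finset.range (q - 1)) (f := fun k : ℕ => (k : ℚ))
    rw [Finset.card_range] at this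
    omega
  have h0 : (0 : ℚ) ∈ A := by
    rw [hA, Finset.mem_insert, Finset.mem_image]
    exact Or.inr ⟨0, Finset.mem_range.mpr (by omega), by simp⟩
  have h1 : (1 : ℚ) ∈ A := by
    rw [hA, Finset.mem_insert, Finset.mem_image]
    exact Or.inr ⟨1, Finset.mem_range.mpr (by omega), by simp⟩
  have h2 : (q : ℚ) ∈ A := by rw [hA]; exact Finset.mem_insert_self _ _
  obtain ⟨y, ε, hε, hole⟩ := K_hole hq hA1 hc h0 h1 h2
  -- the multiplier
  set s := Nat.totient (p ^ 2) with hs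
  have hspos : 0 < s := Nat.totient_pos.mpr (by positivity)
  obtain ⟨R, hRdef⟩ : ∃ R : ℤ, (q : ℤ) ^ s = 1 + R := ⟨(q : ℤ) ^ s - 1, by ring⟩
  have hRp : (p : ℤ) ^ 2 ∣ R := by
    have := Nat.ModEq.pow_totient (Nat.Coprime.pow_left 2 hpq).symm
    have := (Nat.modEq_iff_dvd.mp this.symm)
    push_cast at this
    rw [hRdef] at this
    simpa using this
  have hRpos : 0 < R := by
    have : (1 : ℤ) < (q : ℤ) ^ s := one_lt_pow₀ (by exact_mod_cast (by omega : 1 < q)) hspos.ne'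
    linarith
  obtain ⟨N, hN⟩ := exists_nat_gt (1 / ε)
  have key : ∀ x ∈ Dset p ∩ Kset q A, ∃ r : ℚ, (R : ℝ) * x = r ∧ r.den ≤ N := by
    rintro x ⟨⟨n, -, m, hx⟩, hxK⟩
    have hp0 : (p : ℝ) ≠ 0 := by positivity
    have htr : ∀ t : ℤ, ∃ j : ℤ, x + t * (R * x) + j ∈ Kset q A := by
      intro t
      obtain ⟨k, c, hk⟩ := aux_B p hp R hRp t n
      obtain ⟨j, hj⟩ := K_pow hq hA1 x hxK (s * k)
      have hk' : ((q : ℝ) ^ s) ^ k - (1 + R * t) = R * p ^ n * c := by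
        rw [← hRdef] at hk
        exact_mod_cast hk
      refine ⟨j + R * c * m, ?_⟩
      convert hj using 1
      rw [pow_mul, sub_eq_iff_eq_add.mp hk']
      push_cast
      have : (p : ℝ) ^ n * x = m := by rw [hx]; field_simp
      rw [← this]
      ring
    refine ⟨R * m / p ^ n, by rw [hx]; push_cast; ring, ?_⟩
    set r : ℚ := R * m / p ^ n with hr
    have hrx : (R : ℝ) * x = r := by rw [hx, hr]; push_cast; ring
    by_contra! hd
    have hd0 : (0 : ℝ) < r.den := by exact_mod_cast r.den_pos
    have hdε : 1 / (r.den : ℝ) < ε := by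
      have : (N : ℝ) < r.den := by exact_mod_cast hd
      rw [div_lt_iff₀ hd0]
      rw [div_lt_iff₀ hε] at hN
      nlinarith
    -- the grid
    set i : ℤ := ⌊(y - x) * r.den⌋ with hi
    have hcop : IsCoprime r.num (r.den : ℤ) := by
      rw [Int.isCoprime_iff_gcd_eq_one]
      exact r.reduced
    obtain ⟨u, v, huv⟩ := hcop
    obtain ⟨j, hj⟩ := htr (i * u)
    have hrr : (r : ℝ) * r.den = r.num := by exact_mod_cast r.mul_den_eq_num
    have huv' : (u : ℝ) * r.num + v * r.den = 1 := by exact_mod_cast huv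
    refine hole (x + i / r.den) ?_ (j - i * v) ?_
    · have e1 := Int.floor_le ((y - x) * r.den)
      have e2 := Int.lt_floor_add_one ((y - x) * r.den)
      rw [← hi] at e1 e2
      refine lt_of_le_of_lt ?_ hdε
      rw [abs_le]
      constructor
      · rw [← sub_nonneg]
        have : x + i / (r.den : ℝ) - y - -(1 / r.den) = (i + 1 - (y - x) * r.den) / r.den := by
          field_simp; ring
        rw [this]; apply div_nonneg <;> linarith
      · rw [← sub_nonneg]
        have : 1 / (r.den : ℝ) - (x + i / (r.den : ℝ) - y)
          = ((y - x) * r.den - i + 1) / r.den := by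
          field_simp; ring
        rw [this]; apply div_nonneg <;> linarith
    · convert hj using 1
      rw [hrx]
      push_cast
      field_simp
      linear_combination (-(i : ℝ)) * huv' - (i : ℝ) * u * hrr
  have hM : (0 : ℝ) < R * (N.factorial : ℝ) := by
    have : (0 : ℝ) < R := by exact_mod_cast hRpos
    positivity
  refine ((Set.finite_Icc (0 : ℤ) (2 * (R * N.factorial))).image
    (fun i : ℤ => (i : ℝ) / (R * (N.factorial : ℝ)))).subset ?_
  intro x hx
  obtain ⟨r, hr, hd⟩ := key x hx
  obtain ⟨c, hc⟩ := Nat.dvd_factorial r.den_pos hd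
  obtain ⟨b0, b1⟩ := K_bound hq hA1 x hx.2
  have hrr : (r : ℝ) * r.den = r.num := by exact_mod_cast r.mul_den_eq_num
  have hi : ((r.num * c : ℤ) : ℝ) = x * (R * (N.factorial : ℝ)) := by
    rw [hc]; push_cast; rw [← hrr, ← hr]; ring
  refine ⟨r.num * c, ⟨?_, ?_⟩, ?_⟩
  · have : (0 : ℝ) ≤ ((r.num * c : ℤ) : ℝ) := by rw [hi]; positivity
    exact_mod_cast this
  · have : ((r.num * c : ℤ) : ℝ) ≤ 2 * (R * (N.factorial : ℝ)) := by rw [hi]; nlinarith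
    exact_mod_cast this
  · simp only []
    rw [hi]; field_simp
end

section
/- Let q be an integer with q ≥ 3 and let A ⊂ ℚ be a finite set with #A ≥ 2 such that the difference set A − A = {a − a' : a, a' ∈ A} has cardinality strictly less than q. Then for every integer p ≥ 2 with gcd(p,q) = 1, the quantity sup_{α ∈ ℝ} #((D_p + α) ∩ K(q,A)) is finite; that is, there is a uniform finite upper bound on #((D_p + α) ∩ K(q,A)) over all real translations α. -/
open MeasureTheory Pointwise

theorem lte_aux (p q n d t : ℕ) (hp : 2 ≤ p) (hpq : Nat.Coprime p q) (hd : d ∣ p ^ n)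
    (h : (d : ℤ) ∣ (q : ℤ) ^ t - 1) :
    (d : ℤ) ∣ ((q : ℤ) ^ (Nat.totient (p ^ 2)) - 1) * t := by
  set Q : ℤ := (q : ℤ) ^ (Nat.totient (p ^ 2)) with hQ
  have hp2 : ((p : ℤ) ^ 2) ∣ Q - 1 := by
    have h1 : q ^ (Nat.totient (p ^ 2)) ≡ 1 [MOD (p ^ 2)] :=
      Nat.ModEq.pow_totient (Nat.Coprime.symm (hpq.pow_left 2))
    have h2 := (Nat.modEq_iff_dvd.mp h1.symm)
    push_cast at h2
    exact h2
  have hdQ : (d : ℤ) ∣ Q ^ t - 1 := by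
    refine h.trans ?_
    rw [hQ, ← pow_mul, mul_comm, pow_mul]
    simpa using sub_dvd_pow_sub_pow ((q : ℤ) ^ t) 1 (Nat.totient (p ^ 2))
  rw [Int.natCast_dvd, Nat.dvd_iff_prime_pow_dvd_dvd]
  intro l k hl hlk
  rcases Nat.eq_zero_or_pos k with rfl | hk
  · simp
  have hlp : l ∣ p := hl.dvd_of_dvd_pow (((dvd_pow_self l hk.ne').trans hlk).trans hd)
  rw [← Int.natCast_dvd]
  have hlpz : (l : ℤ) ∣ p := by exact_mod_cast hlp
  have hl2 : ((l : ℤ) ^ 2) ∣ Q - 1 := (pow_dvd_pow_of_dvd hlpz 2).trans hp2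
  have hl1 : (l : ℤ) ∣ Q - 1 := (dvd_pow_self _ two_ne_zero).trans hl2
  have hlprime : Prime (l : ℤ) := Nat.prime_iff_prime_int.mp hl
  have hlQ : ¬ (l : ℤ) ∣ Q := by
    intro hc
    have : (l : ℤ) ∣ 1 := by simpa using dvd_sub hc hl1
    exact hlprime.not_isUnit (isUnit_of_dvd_one this)
  have hkQ : ((l : ℤ) ^ k) ∣ Q ^ t - 1 ^ t := by
    rw [one_pow]; refine dvd_trans ?_ hdQ; exact_mod_cast hlk
  push_cast
  rw [pow_dvd_iff_le_emultiplicity] at hkQ ⊢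
  rw [emultiplicity_mul hlprime]
  rcases hl.eq_two_or_odd' with rfl | hodd
  · have h2 := Int.two_pow_sub_pow' (x := Q) (y := 1) t
      (by norm_num at hl2; exact hl2) (by exact_mod_cast hlQ)
    push_cast at hkQ ⊢
    rw [← h2]
    exact hkQ
  · rw [Int.emultiplicity_pow_sub_pow hl hodd hl1 hlQ] at hkQ
    rwa [Int.natCast_emultiplicity]

theorem exists_pow_gt (q s L : ℕ) (hs : s < q) : ∃ N0 : ℕ, ∀ N ≥ N0, L * s ^ N < q ^ N := by
  rcases Nat.eq_zero_or_pos s with rfl | hs0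
  · refine ⟨1, fun N hN => ?_⟩
    rw [zero_pow (by omega), mul_zero]
    exact pow_pos hs N
  have h1 : (1 : ℝ) < (q : ℝ) / s := by
    rw [lt_div_iff₀ (by positivity)]; simpa using hs
  obtain ⟨N0, h0⟩ := pow_unbounded_of_one_lt (L : ℝ) h1
  refine ⟨N0, fun N hN => ?_⟩
  have h2 : (L : ℝ) < ((q : ℝ) / s) ^ N := h0.trans_le (pow_le_pow_right₀ h1.le hN)
  rw [div_pow, lt_div_iff₀ (by positivity)] at h2
  exact_mod_cast h2

theorem core (q p : ℕ) (hq : 3 ≤ q) (hp : 2 ≤ p) (hpq : Nat.Coprime p q)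
    (B : Finset ℤ) (hB : B.card < q) (C : ℕ) :
    ∃ D : ℕ, ∀ (d n : ℕ) (y b : ℕ → ℤ), 0 < d → d ∣ p ^ n → (∀ k, b k ∈ B) →
      (∀ k, y (k + 1) = q * y k - d * b k) → (∀ k, |y k| ≤ C * d) → IsCoprime (y 0) (d : ℤ) →
      d ≤ D := by
  set R : ℕ := q ^ (Nat.totient (p ^ 2)) - 1 with hR
  have hQ1 : 1 < q ^ (Nat.totient (p ^ 2)) :=
    Nat.one_lt_pow (Nat.totient_pos.mpr (by positivity)).ne' (by omega)
  have hR0 : 0 < R := by omega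
  have hRz : (R : ℤ) = (q : ℤ) ^ (Nat.totient (p ^ 2)) - 1 := by
    rw [hR]; push_cast [hQ1.le]; rfl
  obtain ⟨N0, hN0⟩ := exists_pow_gt q B.card (2 * (C + 1) * q * R) hB
  refine ⟨q ^ N0, ?_⟩
  intro d n y b hd hdn hb hy hyC hcop
  have hdq : IsCoprime (q : ℤ) (d : ℤ) := by
    rw [Nat.isCoprime_iff_coprime]
    exact (Nat.Coprime.coprime_dvd_left hdn (hpq.pow_left n)).symm
  have hmod : ∀ k, (d : ℤ) ∣ y k - q ^ k * y 0 := by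
    intro k
    induction k with
    | zero => simp
    | succ k ih =>
      have : y (k+1) - q ^ (k+1) * y 0 = q * (y k - q ^ k * y 0) - d * b k := by rw [hy]; ring
      rw [this]
      exact dvd_sub (ih.mul_left _) (dvd_mul_right _ _)
  have hdist : ∀ j t, 0 < t → R * t < d → y j ≠ y (j + t) := by
    intro j t ht htd he
    have h1 : (d : ℤ) ∣ (q ^ j * y 0) * ((q : ℤ) ^ t - 1) := by
      have := dvd_sub (hmod j) (hmod (j + t))
      rw [← he] at this
      have e : (q ^ j * y 0) * ((q : ℤ) ^ t - 1) =
          y j - q ^ j * y 0 - (y j - q ^ (j + t) * y 0) := by ring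
      rw [e]
      exact this
    have h2 : (d : ℤ) ∣ (q : ℤ) ^ t - 1 :=
      ((hdq.pow_left (m := j)).mul_left hcop).symm.dvd_of_dvd_mul_left h1
    have h3 := lte_aux p q n d t hp hpq hdn h2
    rw [← hRz] at h3
    have h4 : d ∣ R * t := by exact_mod_cast h3
    have := Nat.le_of_dvd (by positivity) h4
    omega
  have hword : ∀ N j k, (∀ i < N, b (j + i) = b (k + i)) →
      y (k + N) - y (j + N) = q ^ N * (y k - y j) := by
    intro N j k
    induction N with
    | zero => simp
    | succ N ih =>
      intro h
      have h1 := ih (fun i hi => h i (by omega))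
      have h2 := h N (by omega)
      rw [← add_assoc, ← add_assoc, hy, hy, h2, pow_succ]
      linear_combination (q : ℤ) * h1
  have hex : ∃ N, 2 * (C + 1) * d < q ^ N := by
    obtain ⟨N, hN⟩ := pow_unbounded_of_one_lt (2 * (C + 1) * d) (show 1 < q by omega)
    exact ⟨N, hN⟩
  set N := Nat.find hex with hNdef
  have hN : 2 * (C + 1) * d < q ^ N := Nat.find_spec hex
  have hNpos : 0 < N := by
    rcases Nat.eq_zero_or_pos N with h | h
    · rw [h, pow_zero] at hN
      have : 0 < 2 * (C + 1) * d := by positivity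
      omega
    · exact h
  have hN' : q ^ (N - 1) ≤ 2 * (C + 1) * d :=
    not_lt.mp (Nat.find_min hex (show N - 1 < N by omega))
  have heq : ∀ j k, (∀ i < N, b (j + i) = b (k + i)) → y j = y k := by
    intro j k h
    have h1 := hword N j k h
    have h2 := hyC (k + N)
    have h3 := hyC (j + N)
    have h4 : |y (k + N) - y (j + N)| < q ^ N := by
      have hNz : 2 * ((C : ℤ) + 1) * d < q ^ N := by exact_mod_cast hN
      have := abs_sub (y (k + N)) (y (j + N))
      have hdz : (0 : ℤ) < d := by exact_mod_cast hd
      linarith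
    rw [h1, abs_mul, abs_of_nonneg (by positivity : (0 : ℤ) ≤ (q : ℤ) ^ N)] at h4
    have hqN : (0 : ℤ) < (q : ℤ) ^ N := by positivity
    have h5 : |y k - y j| < 1 := by
      by_contra hc
      push Not at hc
      nlinarith
    have := Int.abs_lt_one_iff.mp h5
    omega
  set T := (d - 1) / R + 1 with hT
  have hTd : d ≤ R * T := by
    have := Nat.lt_mul_div_succ (d - 1) hR0
    rw [hT]; omega
  have hTlt : ∀ k < T, R * k < d := by
    intro k hk
    have h1 : k ≤ (d - 1) / R := by omega
    have h2 := Nat.mul_le_mul_left R h1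
    have h3 := Nat.mul_div_le (d - 1) R
    omega
  have hinj : Function.Injective (fun (k : Fin T) (i : Fin N) => (⟨b (k + i), hb _⟩ : B)) := by
    have key : ∀ j k : ℕ, k < T → j < k → (∀ i < N, b (j + i) = b (k + i)) → False := by
      intro j k hk hjk h
      have := hdist j (k - j) (by omega)
        (lt_of_le_of_lt (Nat.mul_le_mul_left R (Nat.sub_le k j)) (hTlt k hk))
      rw [show j + (k - j) = k by omega] at this
      exact this (heq j k h)
    intro j k h
    have h' : ∀ i < N, b (j + i) = b (k + i) := by
      intro i hi
      have := congrFun h ⟨i, hi⟩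
      simpa using this
    rcases lt_trichotomy (j : ℕ) k with hlt | he | hgt
    · exact (key _ _ k.2 hlt h').elim
    · exact Fin.ext he
    · exact (key _ _ j.2 hgt (fun i hi => (h' i hi).symm)).elim
  have hTcard : T ≤ B.card ^ N := by
    simpa using Fintype.card_le_of_injective _ hinj
  have hNlt : N < N0 := by
    by_contra hc
    push Not at hc
    have h1 := hN0 N hc
    have h2 : q ^ N = q ^ (N - 1) * q := by rw [← pow_succ]; congr 1; omega
    have h3 : q ^ N ≤ 2 * (C + 1) * q * R * B.card ^ N := by
      calc q ^ N = q ^ (N - 1) * q := h2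
        _ ≤ 2 * (C + 1) * (R * B.card ^ N) * q := by
          gcongr
          refine hN'.trans ?_
          gcongr
          exact hTd.trans (Nat.mul_le_mul_left R hTcard)
        _ = _ := by ring
    omega
  have h1 : q ^ N ≤ q ^ N0 := Nat.pow_le_pow_right (by omega) hNlt.le
  nlinarith

theorem summ_aux (q : ℕ) (hq : 3 ≤ q) (c : ℕ → ℝ) (C : ℝ) (hc : ∀ i, |c i| ≤ C) :
    Summable (fun i : ℕ => c i / (q : ℝ) ^ (i + 1)) ∧
      |∑' i : ℕ, c i / (q : ℝ) ^ (i + 1)| ≤ C := by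
  have hq' : (3 : ℝ) ≤ q := by exact_mod_cast hq
  have hC : 0 ≤ C := (abs_nonneg _).trans (hc 0)
  have hg : HasSum (fun i : ℕ => C * (1 / 2) * (1 / 2 : ℝ) ^ i) C := by
    have := (hasSum_geometric_two).mul_left (C * (1 / 2))
    rwa [show C * (1 / 2) * 2 = C by ring] at this
  have hb : ∀ i : ℕ, ‖c i / (q : ℝ) ^ (i + 1)‖ ≤ C * (1 / 2) * (1 / 2 : ℝ) ^ i := by
    intro i
    rw [Real.norm_eq_abs, abs_div, abs_of_pos (by positivity : (0 : ℝ) < (q : ℝ) ^ (i + 1))]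
    have : C * (1 / 2) * (1 / 2 : ℝ) ^ i = C / 2 ^ (i + 1) := by
      rw [pow_succ, one_div_pow]; field_simp
    rw [this]
    gcongr
    · exact hc i
    · linarith
  exact ⟨Summable.of_norm_bounded hg.summable hb, tsum_of_norm_bounded hg hb⟩

theorem int_case (q p : ℕ) (hq : 3 ≤ q) (hp : 2 ≤ p) (hpq : Nat.Coprime p q)
    (B : Finset ℤ) (hB : B.card < q) :
    ∃ F : Set ℝ, F.Finite ∧ ∀ (b : ℕ → ℤ) (n : ℕ) (m : ℤ), (∀ i, b i ∈ B) →
      ∑' i : ℕ, (b i : ℝ) / (q : ℝ) ^ (i + 1) = (m : ℝ) / (p : ℝ) ^ n →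
      (m : ℝ) / (p : ℝ) ^ n ∈ F := by
  set C : ℕ := ∑ z ∈ B, z.natAbs with hCdef
  have hC : ∀ z ∈ B, |(z : ℝ)| ≤ C := by
    intro z hz
    have h1 : z.natAbs ≤ C := Finset.single_le_sum (f := fun z : ℤ => z.natAbs)
      (fun _ _ => Nat.zero_le _) hz
    have h2 : |(z : ℝ)| = (z.natAbs : ℝ) := by rw [Nat.cast_natAbs]; simp
    rw [h2]
    exact_mod_cast h1
  obtain ⟨D, hD⟩ := core q p hq hp hpq B hB C
  refine ⟨(fun w : ℤ × ℤ => (w.1 : ℝ) / w.2) ''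
    (↑((Finset.Icc (-((C * D : ℕ) : ℤ)) ((C * D : ℕ) : ℤ)) ×ˢ Finset.Icc (0 : ℤ) D) : Set (ℤ × ℤ)),
    (Finset.finite_toSet _).image _, ?_⟩
  intro b n m hb hsum
  set r : ℚ := (m : ℚ) / (p : ℚ) ^ n with hr
  have hrR : (m : ℝ) / (p : ℝ) ^ n = (r : ℝ) := by rw [hr]; push_cast; rfl
  have hden : r.den ∣ p ^ n := by
    have h1 : r = Rat.divInt m ((p ^ n : ℕ) : ℤ) := by
      rw [Rat.divInt_eq_div, hr]; push_cast; rfl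
    have h2 := Rat.den_dvd m ((p ^ n : ℕ) : ℤ)
    rw [← h1] at h2
    exact_mod_cast h2
  set y : ℕ → ℤ := fun k => Nat.rec r.num (fun k z => (q : ℤ) * z - r.den * b k) k with hydef
  have hy0 : y 0 = r.num := rfl
  have hys : ∀ k, y (k + 1) = q * y k - r.den * b k := fun k => rfl
  set tl : ℕ → ℝ := fun k => ∑' i : ℕ, (b (k + i) : ℝ) / (q : ℝ) ^ (i + 1) with htl
  have hq0 : (q : ℝ) ≠ 0 := by positivity
  have hS := fun k => summ_aux q hq (fun i => (b (k + i) : ℝ)) C (fun i => hC _ (hb _))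
  have htls : ∀ k, tl (k + 1) = q * tl k - b k := by
    intro k
    have h1 := (hS k).1.tsum_eq_zero_add
    simp only [htl]
    rw [h1, mul_add, ← tsum_mul_left]
    have : ∀ i : ℕ, (q : ℝ) * ((b (k + (i + 1)) : ℝ) / (q : ℝ) ^ (i + 1 + 1)) =
        (b (k + 1 + i) : ℝ) / (q : ℝ) ^ (i + 1) := by
      intro i
      rw [show k + (i + 1) = k + 1 + i by ring, pow_succ _ (i + 1)]
      field_simp
    simp only [this]
    simp
    field_simp
    ring
  have hyt : ∀ k, (y k : ℝ) = r.den * tl k := by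
    intro k
    induction k with
    | zero =>
      have h0 : tl 0 = (r : ℝ) := by
        simp only [htl, zero_add]; rw [hsum, hrR]
      rw [h0, hy0]
      have := Rat.den_mul_eq_num r
      exact_mod_cast this.symm
    | succ k ih =>
      rw [hys, htls]; push_cast; rw [ih]; ring
  have hyC : ∀ k, |y k| ≤ C * r.den := by
    intro k
    have h1 : |(y k : ℝ)| ≤ C * r.den := by
      rw [hyt, abs_mul, Nat.abs_cast, mul_comm]
      gcongr
      exact (hS k).2
    exact_mod_cast h1
  have hdD : r.den ≤ D := hD r.den n y b r.den_pos hden hb hys hyC (by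
    rw [hy0, Int.isCoprime_iff_gcd_eq_one]
    exact r.reduced)
  refine ⟨(r.num, (r.den : ℤ)), ?_, ?_⟩
  · have h0 := hyC 0
    rw [hy0] at h0
    have h1 : (C : ℤ) * r.den ≤ ((C * D : ℕ) : ℤ) := by
      exact_mod_cast Nat.mul_le_mul_left C hdD
    have h2 := abs_le.mp (h0.trans h1)
    simp only [Finset.coe_product, Set.mem_prod, Finset.mem_coe, Finset.mem_Icc]
    exact ⟨h2, by positivity, by exact_mod_cast hdD⟩
  · rw [hrR]
    simp only [Int.cast_natCast]
    exact (Rat.cast_def r).symm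

theorem uniform_bound_of_small_difference_set (q : ℕ) (hq : 3 ≤ q)
    (A : Finset ℚ) (hA : 2 ≤ A.card) (hAA : (A - A).card < q)
    (p : ℕ) (hp : 2 ≤ p) (hpq : Nat.Coprime p q) :
    ∃ M : ℕ, ∀ α : ℝ,
      (((fun x : ℝ => x + α) '' Dset p) ∩ Kset q A).Finite ∧
      (((fun x : ℝ => x + α) '' Dset p) ∩ Kset q A).ncard ≤ M := by
  set P : ℕ := ∏ r ∈ A - A, r.den with hP
  have hP0 : (P : ℝ) ≠ 0 := by
    rw [Nat.cast_ne_zero, hP]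
    exact Finset.prod_ne_zero_iff.mpr (fun r _ => r.den_nz)
  have hint : ∀ r ∈ A - A, (((P : ℚ) * r).num : ℚ) = P * r := by
    intro r hr
    obtain ⟨k, hk⟩ : r.den ∣ P := Finset.dvd_prod_of_mem (fun r : ℚ => r.den) hr
    have : (P : ℚ) * r = ((k * r.num : ℤ) : ℚ) := by
      rw [hk]; push_cast
      rw [← Rat.den_mul_eq_num r]; ring
    rw [this, Rat.num_intCast]
  obtain ⟨F, hF, hFm⟩ := int_case q p hq hp hpq ((A - A).image (fun r => ((P : ℚ) * r).num))
    (Finset.card_image_le.trans_lt hAA)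
  set C : ℝ := ∑ z ∈ A, |(z : ℝ)| with hCdef
  have hC : ∀ z ∈ A, |(z : ℝ)| ≤ C := fun z hz =>
    Finset.single_le_sum (f := fun z : ℚ => |(z : ℝ)|) (fun _ _ => abs_nonneg _) hz
  have key : ∀ α x x', x ∈ ((fun x : ℝ => x + α) '' Dset p) ∩ Kset q A →
      x' ∈ ((fun x : ℝ => x + α) '' Dset p) ∩ Kset q A → P * (x - x') ∈ F := by
    rintro α x x' ⟨⟨u, ⟨n, -, m, hu⟩, hux⟩, a, ha, hxa⟩ ⟨⟨u', ⟨n', -, m', hu'⟩, hux'⟩, a', ha', hxa'⟩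
    have hp0 : (p : ℝ) ≠ 0 := by positivity
    have hD : (P : ℝ) * (x - x') =
        ((P * (m * p ^ n' - m' * p ^ n) : ℤ) : ℝ) / (p : ℝ) ^ (n + n') := by
      simp only at hux hux'
      rw [← hux, ← hux', hu, hu', pow_add]
      push_cast
      field_simp
      ring
    have hmem : ∀ i, a i - a' i ∈ A - A := fun i => Finset.sub_mem_sub (ha i) (ha' i)
    have hs := (summ_aux q hq (fun i => (a i : ℝ)) C (fun i => hC _ (ha i))).1
    have hs' := (summ_aux q hq (fun i => (a' i : ℝ)) C (fun i => hC _ (ha' i))).1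
    rw [hD]
    refine hFm (fun i => ((P : ℚ) * (a i - a' i)).num) _ _
      (fun i => Finset.mem_image_of_mem _ (hmem i)) ?_
    rw [← hD, hxa, hxa', ← hs.tsum_sub hs', ← tsum_mul_left]
    congr 1
    funext i
    have h1 : ((((P : ℚ) * (a i - a' i)).num : ℤ) : ℝ) = P * ((a i : ℝ) - a' i) := by
      exact_mod_cast congrArg (fun z : ℚ => (z : ℝ)) (hint _ (hmem i))
    rw [h1]
    ring
  refine ⟨F.ncard, fun α => ?_⟩
  rcases Set.eq_empty_or_nonempty (((fun x : ℝ => x + α) '' Dset p) ∩ Kset q A) with he | ⟨x0, hx0⟩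
  · rw [he]; simp
  have hinj : Function.Injective (fun x : ℝ => (P : ℝ) * (x - x0)) := by
    intro x x' h
    simpa [hP0] using h
  have hmaps : Set.MapsTo (fun x : ℝ => (P : ℝ) * (x - x0))
      (((fun x : ℝ => x + α) '' Dset p) ∩ Kset q A) F := fun x hx => key α x x0 hx hx0
  exact ⟨Set.Finite.of_injOn hmaps hinj.injOn hF,
    Set.ncard_le_ncard_of_injOn _ hmaps hinj.injOn hF⟩
end

section
/- Let q be an integer with q ≥ 4 and let A be a subset of {0, 1, …, ⌊q/2⌋ − 1} with #A ≥ 2. Then for every integer p ≥ 2 with gcd(p,q) = 1, there is a uniform finite upper bound on #((D_p + α) ∩ K(q,A)) over all real numbers α. -/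
open MeasureTheory

theorem lte_dvd (p n N g t : ℕ) (hN : N ∣ p ^ n) (hg : 1 ≤ g) (hpg : (p:ℤ)^2 ∣ (g:ℤ) - 1) 
    (h : (N:ℤ) ∣ (g:ℤ)^t - 1) : (N:ℤ) ∣ ((g:ℤ)-1) * t := by
  have e : ((g:ℤ)-1) * t = (((g-1)*t : ℕ):ℤ) := by push_cast [hg]; ring
  rw [e, Int.natCast_dvd_natCast, Nat.dvd_iff_prime_pow_dvd_dvd]
  intro l k hl hlk
  rcases Nat.eq_zero_or_pos k with rfl | hk
  · simp
  have hlp : l ∣ p := hl.dvd_of_dvd_pow ((dvd_pow_self l hk.ne').trans (hlk.trans hN))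
  have hlp2 : (l:ℤ)^2 ∣ (g:ℤ)-1 := (pow_dvd_pow_of_dvd (Int.natCast_dvd_natCast.2 hlp) 2).trans hpg
  have hl1 : (l:ℤ) ∣ (g:ℤ)-1 := (dvd_pow_self _ two_ne_zero).trans hlp2
  have hlg : ¬ (l:ℤ) ∣ (g:ℤ) := by
    intro h
    have h2 := dvd_sub h hl1
    rw [sub_sub_cancel] at h2
    have := Int.natCast_dvd_natCast.1 (by simpa using h2 : (l:ℤ) ∣ ((1:ℕ):ℤ))
    exact hl.one_lt.ne' (Nat.dvd_one.1 this)
  have hd : (l:ℤ)^k ∣ (g:ℤ)^t - 1 := (by exact_mod_cast hlk : (l:ℤ)^k ∣ (N:ℤ)).trans h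
  have key : emultiplicity (l:ℤ) ((g:ℤ)^t - 1) = emultiplicity (l:ℤ) ((g:ℤ)-1) + emultiplicity (l:ℤ) (t:ℤ) := by
    rcases hl.eq_two_or_odd' with rfl | ho
    · have := Int.two_pow_sub_pow' (x := g) (y := 1) t (by simpa using hlp2) hlg
      simpa using this
    · have := Int.emultiplicity_pow_sub_pow hl ho (x := g) (y := 1) hl1 hlg t
      rw [Int.natCast_emultiplicity]
      simpa using this
  rw [← emultiplicity_mul (Nat.prime_iff_prime_int.1 hl)] at key
  rw [pow_dvd_iff_le_emultiplicity, key, ← pow_dvd_iff_le_emultiplicity, e] at hd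
  exact_mod_cast hd

theorem word_eq (q : ℕ) (b : ℕ → ℤ) (R : ℕ → ℝ) (hR : ∀ k, (q:ℝ) * R k = b k + R (k+1))
    (k s t : ℕ) (h : ∀ i < k, b (s+i) = b (t+i)) :
    (q:ℝ)^k * (R s - R t) = R (s+k) - R (t+k) := by
  induction k with
  | zero => simp
  | succ k ih =>
    have h1 := ih (fun i hi => h i (by omega))
    have h2 := h k (by omega)
    have h3 := hR (s+k)
    have h4 := hR (t+k)
    rw [h2] at h3
    rw [pow_succ, mul_comm ((q:ℝ)^k), mul_assoc, h1, mul_sub, h3, h4]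
    simp [add_assoc]

theorem core_bound (q p n N d : ℕ) (hq : 4 ≤ q) (num : ℤ) (b : ℕ → ℤ) (R : ℕ → ℝ) (B : Finset ℤ)
    (hB : B.card ≤ q - 1) (hb : ∀ i, b i ∈ B)
    (hR : ∀ k, (q:ℝ) * R k = b k + R (k+1)) (hR1 : ∀ k, |R k| < 1/2)
    (hN0 : 0 < N) (hN : N ∣ p ^ n) (h0 : (N:ℝ) * R 0 = num) (hcop : IsCoprime num (N:ℤ))
    (hqN : IsCoprime (q:ℤ) (N:ℤ))
    (hd : (p:ℤ)^2 ∣ ((q^d : ℕ):ℤ) - 1) (hd0 : 0 < d) (k : ℕ) (hk : N ≤ q ^ k) :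
    N ≤ (q^d - 1) * (q-1)^k := by
  have hu : ∀ s, ∃ u : ℤ, (N:ℝ) * R s = u ∧ (N:ℤ) ∣ u - q^s * num := by
    intro s
    induction s with
    | zero => exact ⟨num, h0, by simp⟩
    | succ s ih =>
      obtain ⟨u, hu, w, hw⟩ := ih
      refine ⟨q * u - b s * N, ?_, q * w - b s, ?_⟩
      · have := hR s
        push_cast
        rw [← hu]
        linear_combination (-(N:ℝ)) * this
      · rw [pow_succ]; linear_combination (q:ℤ) * hw
  have hcard : (Fintype.piFinset (fun _ : Fin k => B)).card < (Finset.range ((q-1)^k+1)).card := by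
    rw [Fintype.card_piFinset_const, Finset.card_range]
    exact Nat.lt_succ_of_le (by simpa using Nat.pow_le_pow_left hB k)
  obtain ⟨i, hi, j, hj, hij, hf⟩ := Finset.exists_ne_map_eq_of_card_lt_of_maps_to hcard
    (f := fun j => fun i : Fin k => b (d*j + i)) (by
      intro j _
      simp [hb])
  have hq1 : 1 ≤ q ^ d := Nat.one_le_pow _ _ (by omega)
  have hgt : 1 < q ^ d := Nat.one_lt_pow hd0.ne' (by omega)
  have main : ∀ i j, i < j → j ≤ (q-1)^k → 
      (∀ l < k, b (d*j+l) = b (d*i+l)) → N ≤ (q^d - 1) * (q-1)^k := by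
    intro i j hij hj hw
    have h1 := word_eq q b R hR k _ _ hw
    obtain ⟨u, hu1, hu2⟩ := hu (d*j)
    obtain ⟨v, hv1, hv2⟩ := hu (d*i)
    have huv : u = v := by
      have h2 : |(q:ℝ)^k * (R (d*j) - R (d*i))| < 1 := by
        rw [h1]
        have a1 := abs_lt.1 (hR1 (d*j+k))
        have a2 := abs_lt.1 (hR1 (d*i+k))
        rw [abs_lt]; constructor <;> linarith
      have h3 : |(N:ℝ) * (R (d*j) - R (d*i))| < 1 := by
        refine lt_of_le_of_lt ?_ h2
        rw [abs_mul, abs_mul, Nat.abs_cast, abs_of_nonneg (by positivity : (0:ℝ) ≤ (q:ℝ)^k)]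
        gcongr
        exact_mod_cast hk
      have h4 : (N:ℝ) * (R (d*j) - R (d*i)) = ((u - v : ℤ):ℝ) := by
        push_cast; rw [← hu1, ← hv1]; ring
      rw [h4] at h3
      have h5 : |u - v| < 1 := by exact_mod_cast h3
      have := Int.abs_lt_one_iff.1 h5
      omega
    subst huv
    have h6 : (N:ℤ) ∣ (q:ℤ)^(d*i) * num * (((q^d:ℕ):ℤ)^(j-i) - 1) := by
      have h7 := dvd_sub hv2 hu2
      have e : (q:ℤ)^(d*j) = q^(d*i) * ((q^d:ℕ):ℤ)^(j-i) := by
        push_cast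
        rw [← pow_mul, ← pow_add, ← mul_add]
        congr 2; omega
      rw [e] at h7
      have e2 : (q:ℤ)^(d*i) * num * (((q^d:ℕ):ℤ)^(j-i) - 1) =
          (u - (q:ℤ)^(d*i) * num) - (u - (q:ℤ)^(d*i) * ((q^d:ℕ):ℤ)^(j-i) * num) := by ring
      rw [e2]
      exact h7
    have h8 : (N:ℤ) ∣ ((q^d:ℕ):ℤ)^(j-i) - 1 :=
      (IsCoprime.mul_left hqN.pow_left hcop).symm.dvd_of_dvd_mul_left h6
    have h9 := lte_dvd p n N (q^d) (j-i) hN hq1 hd h8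
    have e : (((q^d:ℕ):ℤ) - 1) * ((j-i:ℕ):ℤ) = (((q^d-1)*(j-i) : ℕ):ℤ) := by
      rw [Nat.cast_mul, Nat.cast_sub hq1]; simp
    rw [e, Int.natCast_dvd_natCast] at h9
    refine (Nat.le_of_dvd (Nat.mul_pos (by omega) (by omega)) h9).trans ?_
    exact Nat.mul_le_mul_left _ (by omega)
  simp only [Finset.mem_range] at hi hj
  have hf' : ∀ l < k, b (d*i+l) = b (d*j+l) := fun l hl => congrFun hf ⟨l, hl⟩
  rcases lt_or_gt_of_ne hij with h | h
  · exact main i j h (by omega) (fun l hl => (hf' l hl).symm)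
  · exact main j i h (by omega) hf'

theorem exists_N0 (q G : ℕ) (hq : 4 ≤ q) : ∃ N0 : ℕ, ∀ N : ℕ,
    (∀ k, N ≤ q^k → N ≤ G * (q-1)^k) → N ≤ N0 := by
  have hq0 : (0:ℝ) < q := by positivity
  have hcast : ((q-1:ℕ):ℝ) = q - 1 := by rw [Nat.cast_sub (by omega)]; simp
  have hlt : ((q-1:ℕ):ℝ)/q < 1 := by rw [div_lt_one hq0, hcast]; linarith
  obtain ⟨k0, hk0⟩ := exists_pow_lt_of_lt_one (show (0:ℝ) < 1/(G*(q-1:ℕ)+1) by positivity) hlt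
  refine ⟨q^k0, fun N hN => ?_⟩
  by_contra hc
  push Not at hc
  set k := Nat.log q N with hk
  have hk1 : k0 ≤ k := Nat.le_log_of_pow_le (by omega) hc.le
  have hk2 : q^k ≤ N := Nat.pow_log_le_self q (by have := Nat.zero_le (q^k0); omega)
  have hk3 : N ≤ q^(k+1) := (Nat.lt_pow_succ_log_self (by omega) N).le
  have h1 : q^k ≤ G * (q-1)^(k+1) := hk2.trans (hN _ hk3)
  have h2 : (((q-1:ℕ):ℝ)/q)^k < 1/(G*(q-1:ℕ)+1) :=
    lt_of_le_of_lt (pow_le_pow_of_le_one (by positivity) hlt.le hk1) hk0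
  rw [div_pow, div_lt_div_iff₀ (by positivity) (by positivity)] at h2
  have h3 : (q:ℝ)^k ≤ G * ((q-1:ℕ):ℝ)^(k+1) := by exact_mod_cast h1
  have h4 : (0:ℝ) < ((q-1:ℕ):ℝ)^k := by
    have : (0:ℝ) < ((q-1:ℕ):ℝ) := by exact_mod_cast (by omega : 0 < q-1)
    positivity
  rw [pow_succ] at h3
  nlinarith

theorem tail_facts (q h : ℕ) (hq : 4 ≤ q) (hh : 2 * h + 2 ≤ q) (b : ℕ → ℤ)
    (hb : ∀ i, |b i| ≤ h) (k : ℕ) :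
    Summable (fun i => (b (i+k) : ℝ)/(q:ℝ)^(i+1)) ∧
    |∑' i, (b (i+k) : ℝ)/(q:ℝ)^(i+1)| < 1/2 := by
  have hq0 : (4:ℝ) ≤ q := by exact_mod_cast hq
  have hg : HasSum (fun i : ℕ => (h:ℝ)/q * ((q:ℝ)⁻¹)^i) ((h:ℝ)/q * (1 - (q:ℝ)⁻¹)⁻¹) :=
    (hasSum_geometric_of_lt_one (by positivity) (inv_lt_one_of_one_lt₀ (by linarith))).mul_left _
  have hle : ∀ i, ‖(b (i+k) : ℝ)/(q:ℝ)^(i+1)‖ ≤ (h:ℝ)/q * ((q:ℝ)⁻¹)^i := by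
    intro i
    have e : (h:ℝ)/q * ((q:ℝ)⁻¹)^i = h / (q:ℝ)^(i+1) := by
      rw [pow_succ, inv_pow]; field_simp
    rw [e, norm_div, Real.norm_eq_abs, Real.norm_eq_abs, abs_of_nonneg (by positivity : (0:ℝ) ≤ (q:ℝ)^(i+1))]
    gcongr
    exact_mod_cast hb (i+k)
  refine ⟨Summable.of_norm_bounded hg.summable hle, ?_⟩
  have := tsum_of_norm_bounded hg hle
  rw [Real.norm_eq_abs] at this
  refine lt_of_le_of_lt this ?_
  have e : (h:ℝ)/q * (1 - (q:ℝ)⁻¹)⁻¹ = h / (q - 1) := by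
    have : (q:ℝ) - 1 ≠ 0 := by linarith
    field_simp
  rw [e, div_lt_div_iff₀ (by linarith) (by norm_num)]
  have : 2 * (h:ℝ) + 2 ≤ q := by exact_mod_cast hh
  linarith

theorem diff_finite (q h p : ℕ) (hq : 4 ≤ q) (hh : 2 * h + 2 ≤ q) (hp : 2 ≤ p)
    (hpq : Nat.Coprime p q) : ∃ F : Finset ℝ, ∀ b : ℕ → ℤ, (∀ i, |b i| ≤ h) →
      ∀ (n : ℕ) (m : ℤ), (∑' i, (b i : ℝ)/(q:ℝ)^(i+1)) = (m:ℝ)/(p:ℝ)^n →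
        (∑' i, (b i : ℝ)/(q:ℝ)^(i+1)) ∈ F := by
  set d := Nat.totient (p^2) with hd
  obtain ⟨N0, hN0⟩ := exists_N0 q (q^d - 1) hq
  refine ⟨((Finset.Icc (-(N0:ℤ)) N0) ×ˢ Finset.range (N0+1)).image (fun z => (z.1:ℝ)/(z.2:ℝ)), ?_⟩
  intro b hb n m hx
  set R : ℕ → ℝ := fun k => ∑' i, (b (i+k) : ℝ)/(q:ℝ)^(i+1) with hRdef
  have hR0 : (∑' i, (b i : ℝ)/(q:ℝ)^(i+1)) = R 0 := by simp [hRdef]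
  rw [hR0] at hx ⊢
  have hq0 : (q:ℝ) ≠ 0 := by positivity
  have hR : ∀ k, (q:ℝ) * R k = b k + R (k+1) := by
    intro k
    have h1 := (tail_facts q h hq hh b hb k).1.tsum_eq_zero_add
    simp only [hRdef]
    rw [h1, mul_add, ← tsum_mul_left]
    congr 1
    · simp; field_simp
    · apply tsum_congr
      intro i
      rw [show i + 1 + k = i + (k+1) by ring, pow_succ _ (i+1)]
      field_simp
  have hR1 : ∀ k, |R k| < 1/2 := fun k => (tail_facts q h hq hh b hb k).2
  set x : ℚ := Rat.divInt m ((p^n:ℕ):ℤ) with hxd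
  have hxR : R 0 = (x:ℝ) := by rw [hx, hxd, Rat.divInt_eq_div]; push_cast; rfl
  have hN : x.den ∣ p^n := by
    have := Rat.den_dvd m ((p^n:ℕ):ℤ)
    exact_mod_cast this
  have hden : (x.den:ℝ) ≠ 0 := by exact_mod_cast x.den_nz
  have h0 : (x.den:ℝ) * R 0 = x.num := by
    rw [hxR]; exact_mod_cast Rat.den_mul_eq_num x
  have hcop : IsCoprime x.num (x.den:ℤ) := by
    rw [Int.isCoprime_iff_gcd_eq_one]
    exact x.reduced
  have hqN : IsCoprime (q:ℤ) (x.den:ℤ) := by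
    rw [Nat.isCoprime_iff_coprime]
    exact Nat.Coprime.coprime_dvd_right hN (hpq.symm.pow_right n)
  have hd0 : 0 < d := Nat.totient_pos.2 (by positivity)
  have hdd : (p:ℤ)^2 ∣ ((q^d : ℕ):ℤ) - 1 := by
    have h1 := Nat.ModEq.pow_totient (hpq.symm.pow_right 2)
    have h2 := (Nat.modEq_iff_dvd.1 h1.symm)
    simpa using h2
  have hNle : x.den ≤ N0 := hN0 _ fun k hk =>
    core_bound q p n x.den d hq x.num b R (Finset.Icc (-(h:ℤ)) h) (by simp; omega)
      (fun i => by rw [Finset.mem_Icc]; exact abs_le.1 (hb i)) hR hR1 x.den_pos hN h0 hcop hqN hdd hd0 k hk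
  have hnum : |x.num| ≤ N0 := by
    have h1 : |(x.num:ℝ)| ≤ (N0:ℝ) := by
      rw [← h0, abs_mul, abs_of_nonneg (by positivity : (0:ℝ) ≤ (x.den:ℝ))]
      have h2 := hR1 0
      have h3 : (x.den:ℝ) ≤ N0 := by exact_mod_cast hNle
      have h4 : (0:ℝ) ≤ x.den := by positivity
      nlinarith [abs_nonneg (R 0)]
    exact_mod_cast h1
  rw [Finset.mem_image]
  refine ⟨(x.num, x.den), ?_, ?_⟩
  · rw [Finset.mem_product, Finset.mem_Icc, Finset.mem_range]
    exact ⟨abs_le.1 hnum, by simp only; omega⟩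
  · simp only
    rw [← h0]; field_simp

theorem uniform_bound_of_small_digits (q : ℕ) (hq : 4 ≤ q)
    (A : Finset ℚ) (hA : 2 ≤ A.card)
    (hdigits : ∀ a ∈ A, ∃ k : ℕ, k < q / 2 ∧ a = (k : ℚ))
    (p : ℕ) (hp : 2 ≤ p) (hpq : Nat.Coprime p q) :
    ∃ M : ℕ, ∀ α : ℝ,
      (((fun x : ℝ => x + α) '' Dset p) ∩ Kset q A).Finite ∧
      (((fun x : ℝ => x + α) '' Dset p) ∩ Kset q A).ncard ≤ M := by
  set h := q/2 - 1 with hh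
  have hh2 : 2 * h + 2 ≤ q := by omega
  obtain ⟨F, hF⟩ := diff_finite q h p hq hh2 hp hpq
  have hp0 : (p:ℝ) ≠ 0 := by positivity
  have hK : ∀ x ∈ Kset q A, ∃ a : ℕ → ℤ, (∀ i, 0 ≤ a i ∧ a i ≤ h) ∧
      x = ∑' i : ℕ, (a i : ℝ) / (q : ℝ) ^ (i + 1) := by
    rintro x ⟨a, ha, hx⟩
    choose c hc hc2 using fun i => hdigits (a i) (ha i)
    refine ⟨fun i => (c i : ℤ), fun i => ⟨by positivity, ?_⟩, ?_⟩
    · have := hc i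
      simp only
      omega
    · rw [hx]
      apply tsum_congr
      intro i
      rw [hc2 i]
      simp
  refine ⟨F.card, fun α => ?_⟩
  set S := ((fun x : ℝ => x + α) '' Dset p) ∩ Kset q A with hS
  rcases S.eq_empty_or_nonempty with he | ⟨x0, hx0⟩
  · rw [he]; simp
  have hsub : S ⊆ ((F.image (fun y => y + x0) : Finset ℝ) : Set ℝ) := by
    rintro x ⟨⟨y, ⟨n, -, m, rfl⟩, hy⟩, hxK⟩
    obtain ⟨⟨y0, ⟨n0, -, m0, rfl⟩, hy0⟩, hxK0⟩ := hx0
    obtain ⟨a, ha, hxa⟩ := hK x hxK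
    obtain ⟨a0, ha0, hxa0⟩ := hK x0 hxK0
    have s1 := (tail_facts q h hq hh2 a (fun i => abs_le.2 ⟨by have := ha i; omega, (ha i).2⟩) 0).1
    have s2 := (tail_facts q h hq hh2 a0 (fun i => abs_le.2 ⟨by have := ha0 i; omega, (ha0 i).2⟩) 0).1
    simp only [add_zero] at s1 s2
    have e : ∑' i, (((fun i => a i - a0 i) i : ℤ) : ℝ)/(q:ℝ)^(i+1) = x - x0 := by
      rw [hxa, hxa0, ← s1.tsum_sub s2]
      apply tsum_congr
      intro i
      push_cast
      ring
    have := hF (fun i => a i - a0 i) (fun i => by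
      have := ha i
      have := ha0 i
      rw [abs_le]; constructor <;> omega) (n + n0) (m * p^n0 - m0 * p^n) (by
      rw [e, ← hy, ← hy0]
      push_cast
      rw [pow_add]
      field_simp
      ring)
    rw [e] at this
    rw [Finset.coe_image]
    exact ⟨x - x0, this, by simp⟩
  refine ⟨(Finset.finite_toSet _).subset hsub, ?_⟩
  refine (Set.ncard_le_ncard hsub (Finset.finite_toSet _)).trans ?_
  rw [Set.ncard_coe_finset]
  exact Finset.card_image_le
end

section
/- Let q be an integer with q ≥ 3 and let A ⊂ ℚ be a finite set with 2 ≤ #A ≤ √q. Then for every integer p ≥ 2 with gcd(p,q) = 1, there is a uniform finite upper bound on #((D_p + α) ∩ K(q,A)) over all real numbers α. -/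
open MeasureTheory

lemma ub_lte (q p t d n l : ℕ) (hq : 3 ≤ q) (hpq : Nat.Coprime p q)
    (ht : p ^ 2 ∣ q ^ t - 1) (hd : d ∣ p ^ n) (h : d ∣ q ^ l - 1) :
    d ∣ l * (q ^ t - 1) := by
  have hq1 : ∀ s, 1 ≤ q ^ s := fun s => Nat.one_le_pow _ _ (by omega)
  have h2 : d ∣ (q ^ t) ^ l - 1 := by
    refine h.trans ?_
    rw [← pow_mul, mul_comm, pow_mul]
    simpa using Nat.sub_dvd_pow_sub_pow (q ^ l) 1 t
  rw [Nat.dvd_iff_prime_pow_dvd_dvd]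
  intro r k hr hk
  rcases Nat.eq_zero_or_pos k with rfl | hk0
  · simp
  have hrd : r ∣ d := (dvd_pow_self r (by omega)).trans hk
  have hrp : r ∣ p := hr.dvd_of_dvd_pow (hrd.trans hd)
  have hrq : ¬ r ∣ q := fun hh => by
    have := Nat.dvd_gcd hrp hh
    rw [hpq] at this
    exact hr.one_lt.ne' (Nat.dvd_one.mp this)
  have hr2 : r ^ 2 ∣ q ^ t - 1 := (pow_dvd_pow_of_dvd hrp 2).trans ht
  have hr2z : (r : ℤ) ^ 2 ∣ (q : ℤ) ^ t - 1 := by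
    have := Int.natCast_dvd_natCast.mpr hr2
    push_cast [hq1] at this
    exact this
  have hrqt : ¬ (r : ℤ) ∣ (q : ℤ) ^ t := by
    intro hh
    apply hrq
    apply hr.dvd_of_dvd_pow (n := t)
    exact_mod_cast hh
  have h3 : (r : ℤ) ^ k ∣ ((q : ℤ) ^ t) ^ l - 1 ^ l := by
    have := Int.natCast_dvd_natCast.mpr (hk.trans h2)
    have h1 : 1 ≤ (q ^ t) ^ l := Nat.one_le_pow _ _ (hq1 t)
    push_cast [h1] at this
    simpa using this
  have hem : emultiplicity (r : ℤ) (((q : ℤ) ^ t) ^ l - 1 ^ l)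
      = emultiplicity (r : ℤ) ((q : ℤ) ^ t - 1) + emultiplicity (r : ℤ) (l : ℤ) := by
    rcases hr.eq_two_or_odd' with rfl | ho
    · have := Int.two_pow_sub_pow' (x := (q : ℤ) ^ t) (y := 1) l (by simpa using hr2z)
        (by simpa using hrqt)
      exact_mod_cast this
    · rw [Int.emultiplicity_pow_sub_pow hr ho ((dvd_pow_self _ two_ne_zero).trans hr2z) hrqt,
        Int.natCast_emultiplicity]
  rw [pow_dvd_iff_le_emultiplicity, hem,
    ← emultiplicity_mul (Nat.prime_iff_prime_int.mp hr), ← pow_dvd_iff_le_emultiplicity] at h3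
  have : ((r ^ k : ℕ) : ℤ) ∣ ((l * (q ^ t - 1) : ℕ) : ℤ) := by
    push_cast [hq1]
    rw [mul_comm]
    exact h3
  exact_mod_cast this

lemma ub_unroll (q : ℤ) (d : ℤ) (u b : ℕ → ℤ) (hu : ∀ k, u (k + 1) = q * u k - d * b k)
    (i K : ℕ) : u (i + K) = q ^ K * u i - d * ∑ j ∈ Finset.range K, q ^ (K - 1 - j) * b (i + j) := by
  induction K with
  | zero => simp
  | succ K ih =>
    rw [← add_assoc, hu, ih, Finset.sum_range_succ]
    have : ∑ j ∈ Finset.range K, q ^ (K + 1 - 1 - j) * b (i + j)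
        = q * ∑ j ∈ Finset.range K, q ^ (K - 1 - j) * b (i + j) := by
      rw [Finset.mul_sum]
      refine Finset.sum_congr rfl fun j hj => ?_
      have := Finset.mem_range.mp hj
      rw [show K + 1 - 1 - j = (K - 1 - j) + 1 by omega]
      ring
    rw [this]
    simp
    ring

lemma ub_pigeon (q d : ℕ) (B : Finset ℤ) (C K : ℕ) (hdK : d ≤ q ^ K) (hq : 3 ≤ q)
    (u b : ℕ → ℤ) (hb : ∀ k, b k ∈ B) (hu : ∀ k, u (k + 1) = q * u k - d * b k)
    (huC : ∀ k, |u k| ≤ C * d) :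
    ∃ i l : ℕ, 1 ≤ l ∧ l ≤ B.card ^ K * (2 * C + 3) ∧ u (i + l) = u i := by
  set N := B.card ^ K * (2 * C + 3) with hN
  let W : (Fin K → ℤ) → ℤ := fun w => ∑ j : Fin K, (q : ℤ) ^ (K - 1 - (j : ℕ)) * w j
  let w : ℕ → Fin K → ℤ := fun i j => b (i + j)
  let f : ℕ → (Fin K → ℤ) × ℤ := fun i => (w i, u i - (d * W (w i)) / (q : ℤ) ^ K)
  let T : Finset ((Fin K → ℤ) × ℤ) :=
    (Fintype.piFinset fun _ : Fin K => B) ×ˢ Finset.Icc (-(C : ℤ) - 1) (C + 1)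
  have hT : T.card = N := by
    simp only [T, Finset.card_product, Fintype.card_piFinset, Finset.prod_const, Int.card_Icc,
      Finset.card_univ, Fintype.card_fin, hN]
    congr 1
    omega
  have hQ : (0 : ℤ) < (q : ℤ) ^ K := by positivity
  have hmem : ∀ i, f i ∈ T := by
    intro i
    simp only [T, f, Finset.mem_product, Fintype.mem_piFinset, Finset.mem_Icc]
    refine ⟨fun j => hb _, ?_⟩
    have h1 := ub_unroll q d u b hu i K
    have h2 : ∑ j ∈ Finset.range K, (q : ℤ) ^ (K - 1 - j) * b (i + j) = W (w i) := by
      simp only [W, w]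
      rw [Finset.sum_range]
    rw [h2] at h1
    have h3 := abs_le.mp (huC (i + K))
    have h4 := Int.emod_add_mul_ediv (d * W (w i)) ((q : ℤ) ^ K)
    have h5 := Int.emod_nonneg (d * W (w i)) hQ.ne'
    have h6 := Int.emod_lt_of_pos (d * W (w i)) hQ
    set e := (d * W (w i)) / (q : ℤ) ^ K
    set Q := (q : ℤ) ^ K
    have h7 : (C : ℤ) * d ≤ C * Q := by
      have : (d : ℤ) ≤ Q := by
        have := Int.ofNat_le.mpr hdK
        rwa [Nat.cast_pow] at this
      gcongr
    constructor
    · by_contra hh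
      push Not at hh
      have : u i - e ≤ -C - 2 := by omega
      nlinarith
    · by_contra hh
      push Not at hh
      have : u i - e ≥ C + 2 := by omega
      nlinarith
  obtain ⟨x, hx, y, hy, hxy, hf⟩ := Finset.exists_ne_map_eq_of_card_lt_of_maps_to
    (s := Finset.range (N + 1)) (t := T) (f := f) (by simp [hT]) (fun i _ => hmem i)
  have key : u x = u y := by
    simp only [f, Prod.mk.injEq] at hf
    have := hf.2
    rw [hf.1] at this
    linarith
  simp only [Finset.mem_range] at hx hy
  rcases lt_or_gt_of_ne hxy with h | h
  · exact ⟨x, y - x, by omega, by omega, by rw [Nat.add_sub_cancel' h.le, key]⟩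
  · exact ⟨y, x - y, by omega, by omega, by rw [Nat.add_sub_cancel' h.le, key]⟩

lemma ub_bound (q : ℕ) (hq : 3 ≤ q) (p : ℕ) (hp : 2 ≤ p) (hpq : Nat.Coprime p q)
    (B : Finset ℤ) (hB : B.card < q) (C : ℕ) :
    ∃ D : ℕ, ∀ (d n : ℕ) (u b : ℕ → ℤ), d ∣ p ^ n → (∀ k, b k ∈ B) →
      (∀ k, u (k + 1) = q * u k - d * b k) → (∀ k, |u k| ≤ C * d) →
      IsCoprime (u 0) (d : ℤ) → d ≤ D := by
  set t := Nat.totient (p ^ 2) with htdef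
  have htpos : 0 < t := Nat.totient_pos.mpr (by positivity)
  have ht : p ^ 2 ∣ q ^ t - 1 := by
    have : q ^ t ≡ 1 [MOD p ^ 2] := Nat.ModEq.pow_totient (hpq.symm.pow_right 2)
    exact (Nat.modEq_iff_dvd' (Nat.one_le_pow _ _ (by omega))).mp this.symm
  set h := q ^ t - 1 with hh
  have hpos : 0 < h := by
    have : q ^ 1 ≤ q ^ t := Nat.pow_le_pow_right (by omega) htpos
    rw [pow_one] at this
    omega
  have hlim : ∃ K0 : ℕ, ∀ K ≥ K0, q * (h * (2 * C + 3)) * B.card ^ K < q ^ K := by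
    have hr : ((B.card : ℝ) / q) < 1 := by
      rw [div_lt_one (by positivity)]; exact_mod_cast hB
    have := tendsto_pow_atTop_nhds_zero_of_lt_one (by positivity) hr
    have hc : (0 : ℝ) < 1 / ((q * (h * (2 * C + 3)) : ℕ) : ℝ) := by
      have : 0 < q * (h * (2 * C + 3)) := by positivity
      positivity
    obtain ⟨K0, hK0⟩ := Filter.eventually_atTop.mp (this.eventually (gt_mem_nhds hc))
    refine ⟨K0, fun K hK => ?_⟩
    have h1 := hK0 K hK
    rw [div_pow, div_lt_div_iff₀ (by positivity) (by
      have : 0 < q * (h * (2 * C + 3)) := by positivity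
      positivity)] at h1
    have : ((B.card ^ K * (q * (h * (2 * C + 3))) : ℕ) : ℝ) < ((1 * q ^ K : ℕ) : ℝ) := by
      push_cast at h1 ⊢
      exact h1
    have := Nat.cast_lt.mp this
    linarith
  obtain ⟨K0, hK0⟩ := hlim
  refine ⟨q ^ K0, fun d n u b hd hb hu huC hcop => ?_⟩
  by_contra hlt
  push Not at hlt
  have hd0 : d ≠ 0 := by omega
  set K := Nat.log q d + 1 with hK
  have hdK : d < q ^ K := Nat.lt_pow_succ_log_self (by omega) d
  have hdK' : q ^ (K - 1) ≤ d := Nat.pow_log_le_self q hd0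
  have hKK : K0 ≤ K := by
    have : q ^ K0 < q ^ K := hlt.trans hdK
    exact ((Nat.pow_lt_pow_iff_right (by omega)).mp this).le
  obtain ⟨i, l, hl1, hl2, hul⟩ := ub_pigeon q d B C K hdK.le hq u b hb hu huC
  have hcq : IsCoprime (d : ℤ) (q : ℤ) := by
    rw [Nat.isCoprime_iff_coprime]
    exact Nat.Coprime.coprime_dvd_left hd (hpq.pow_left n)
  have hdvd : d ∣ q ^ l - 1 := by
    have e1 := ub_unroll q d u b hu i l
    have e0 := ub_unroll q d u b hu 0 i
    rw [hul] at e1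
    rw [zero_add] at e0
    have h1 : (d : ℤ) ∣ ((q : ℤ) ^ l - 1) * u i :=
      ⟨∑ j ∈ Finset.range l, (q : ℤ) ^ (l - 1 - j) * b (i + j), by linarith⟩
    have hci : IsCoprime (d : ℤ) (u i) := by
      rw [e0, sub_eq_add_neg, ← mul_neg]
      apply IsCoprime.add_mul_left_right
      exact (hcq.pow_right).mul_right hcop.symm
    have h2 := hci.dvd_of_dvd_mul_right h1
    have h3 : (1 : ℕ) ≤ q ^ l := Nat.one_le_pow _ _ (by omega)
    zify [h3]
    exact h2
  have h1 := Nat.le_of_dvd (by positivity) (ub_lte q p t d n l hq hpq ht hd hdvd)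
  have h2 := hK0 K hKK
  have h3 : q ^ K = q * q ^ (K - 1) := by rw [hK]; simp [pow_succ, mul_comm]
  have h4 : q * q ^ (K - 1) ≤ q * (B.card ^ K * (2 * C + 3) * h) := by
    gcongr
    exact hdK'.trans (h1.trans (by gcongr))
  rw [h3] at h2
  nlinarith

lemma ub_tail (q : ℕ) (hq : 3 ≤ q) (C : ℕ) (b : ℕ → ℤ) (hb : ∀ i, |b i| ≤ C) :
    Summable (fun i : ℕ => (b i : ℝ) / (q : ℝ) ^ (i + 1)) ∧
    |∑' i : ℕ, (b i : ℝ) / (q : ℝ) ^ (i + 1)| ≤ C ∧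
    (∑' i : ℕ, (b (i + 1) : ℝ) / (q : ℝ) ^ (i + 1)) =
      q * (∑' i : ℕ, (b i : ℝ) / (q : ℝ) ^ (i + 1)) - b 0 := by
  have hq0 : (0 : ℝ) < q := by positivity
  have hq3 : (3 : ℝ) ≤ q := by exact_mod_cast hq
  have hg : HasSum (fun i : ℕ => (C / q : ℝ) * (1 / q : ℝ) ^ i) ((C / q : ℝ) * (1 - 1 / (q : ℝ))⁻¹) :=
    (hasSum_geometric_of_lt_one (by positivity) (by rw [div_lt_one hq0]; linarith)).mul_left _
  have hle : ∀ i, ‖(b i : ℝ) / (q : ℝ) ^ (i + 1)‖ ≤ (C / q : ℝ) * (1 / q : ℝ) ^ i := by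
    intro i
    have : |(b i : ℝ)| ≤ C := by exact_mod_cast hb i
    rw [norm_div, norm_pow, Real.norm_eq_abs, Real.norm_eq_abs, abs_of_pos hq0, div_pow, one_pow,
      div_mul_div_comm, mul_one, ← pow_succ']
    gcongr
  have hs : Summable (fun i : ℕ => (b i : ℝ) / (q : ℝ) ^ (i + 1)) :=
    Summable.of_norm_bounded hg.summable hle
  refine ⟨hs, ?_, ?_⟩
  · have h1 := tsum_of_norm_bounded hg hle
    rw [Real.norm_eq_abs] at h1
    refine h1.trans ?_
    have : (C / q : ℝ) * (1 - 1 / (q : ℝ))⁻¹ = C / (q - 1) := by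
      have : (q : ℝ) - 1 ≠ 0 := by linarith
      field_simp
    rw [this]
    exact div_le_self (by positivity) (by linarith)
  · rw [hs.tsum_eq_zero_add, mul_add, ← tsum_mul_left]
    have : ∀ i : ℕ, (q : ℝ) * ((b (i + 1) : ℝ) / (q : ℝ) ^ (i + 1 + 1))
        = (b (i + 1) : ℝ) / (q : ℝ) ^ (i + 1) := by
      intro i
      rw [pow_succ' (q : ℝ) (i + 1), mul_div_assoc', mul_div_mul_left _ _ hq0.ne']
    simp only [this]
    rw [zero_add, pow_one, mul_div_cancel₀ _ hq0.ne']
    ring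

lemma ub_finite (q : ℕ) (hq : 3 ≤ q) (p : ℕ) (hp : 2 ≤ p) (hpq : Nat.Coprime p q)
    (B : Finset ℤ) (hB : B.card < q) :
    {x : ℝ | (∃ n : ℕ, ∃ m : ℤ, x = m / (p : ℝ) ^ n) ∧
      ∃ b : ℕ → ℤ, (∀ i, b i ∈ B) ∧ x = ∑' i : ℕ, (b i : ℝ) / (q : ℝ) ^ (i + 1)}.Finite := by
  set C : ℕ := ∑ z ∈ B, z.natAbs with hC
  have hBC : ∀ z ∈ B, |z| ≤ C := by
    intro z hz
    have : z.natAbs ≤ C := Finset.single_le_sum (f := fun z : ℤ => z.natAbs) (fun _ _ => by simp) hz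
    rw [Int.abs_eq_natAbs]
    exact_mod_cast this
  obtain ⟨D, hD⟩ := ub_bound q hq p hp hpq B hB C
  refine Set.Finite.subset (Finset.finite_toSet
    (((Finset.range (D + 1)) ×ˢ (Finset.Icc (-(C * D : ℤ)) (C * D))).image
      (fun s : ℕ × ℤ => (s.2 : ℝ) / (s.1 : ℝ)))) ?_
  rintro x ⟨⟨n, m, hx⟩, b, hb, hxb⟩
  set r : ℚ := m / (p : ℚ) ^ n with hr
  have hxr : x = (r : ℝ) := by rw [hx, hr]; push_cast; rfl
  have hden : r.den ∣ p ^ n := by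
    have h2 : r = Rat.divInt m ((p ^ n : ℕ) : ℤ) := by
      rw [hr, Rat.divInt_eq_div]; push_cast; rfl
    have := Rat.den_dvd m ((p ^ n : ℕ) : ℤ)
    rw [← h2] at this
    exact_mod_cast this
  let T : ℕ → ℝ := fun k => ∑' i : ℕ, (b (i + k) : ℝ) / (q : ℝ) ^ (i + 1)
  have hT0 : T 0 = r := by simp only [T, add_zero]; rw [← hxb, hxr]
  have htail := fun k => ub_tail q hq C (fun i => b (i + k)) (fun i => hBC _ (hb _))
  have hTs : ∀ k, T (k + 1) = q * T k - b k := by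
    intro k
    have := (htail k).2.2
    simp only [zero_add] at this
    simp only [T]
    rw [← this]
    refine tsum_congr fun i => ?_
    rw [show i + (k + 1) = i + 1 + k by ring]
  obtain ⟨u, hu0, hu⟩ : ∃ u : ℕ → ℤ, u 0 = r.num ∧
      ∀ k, u (k + 1) = q * u k - r.den * b k :=
    ⟨fun k => Nat.rec r.num (fun k v => q * v - r.den * b k) k, rfl, fun k => rfl⟩
  have hdpos : (0 : ℝ) < r.den := by exact_mod_cast r.den_pos
  have huT : ∀ k, (u k : ℝ) = r.den * T k := by
    intro k
    induction k with
    | zero =>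
      rw [hT0, hu0]
      have : (r.num : ℚ) = r.den * r := by rw [mul_comm, Rat.mul_den_eq_num]
      exact_mod_cast this
    | succ k ih =>
      rw [hu, hTs]
      push_cast
      rw [ih]
      ring
  have huC : ∀ k, |u k| ≤ C * r.den := by
    intro k
    have h1 : |(u k : ℝ)| ≤ C * r.den := by
      rw [huT, abs_mul, abs_of_pos hdpos, mul_comm]
      gcongr
      exact (htail k).2.1
    exact_mod_cast h1
  have hle := hD r.den n u b hden hb hu huC (by
    rw [Int.isCoprime_iff_gcd_eq_one]
    rw [hu0]
    exact r.reduced)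
  simp only [Finset.coe_image, Set.mem_image, Finset.mem_coe, Finset.mem_product,
    Finset.mem_range, Finset.mem_Icc]
  refine ⟨(r.den, r.num), ⟨by simp only; omega, ?_⟩, ?_⟩
  · have h0 : |r.num| ≤ C * r.den := hu0 ▸ huC 0
    have : (C : ℤ) * r.den ≤ C * D := by gcongr
    exact abs_le.mp (h0.trans this)
  · rw [hxr]
    exact_mod_cast Rat.num_div_den r

lemma ub_card (A : Finset ℤ) (q : ℕ) (hq : 3 ≤ q) (hA : A.card ^ 2 ≤ q) :
    (Finset.image (fun s : ℤ × ℤ => s.1 - s.2) (A ×ˢ A)).card < q := by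
  have hsub : Finset.image (fun s : ℤ × ℤ => s.1 - s.2) (A ×ˢ A) ⊆
      insert 0 (Finset.image (fun s : ℤ × ℤ => s.1 - s.2) A.offDiag) := by
    intro z hz
    simp only [Finset.mem_image, Finset.mem_product, Prod.exists, Finset.mem_insert,
      Finset.mem_offDiag] at hz ⊢
    obtain ⟨a, b, ⟨ha, hb⟩, h⟩ := hz
    by_cases hab : a = b
    · left; subst hab; simpa using h.symm
    · exact Or.inr ⟨a, b, ⟨ha, hb, hab⟩, h⟩
  have h1 := (Finset.card_le_card hsub).trans (Finset.card_insert_le _ _)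
  have h2 := Finset.card_image_le (s := A.offDiag) (f := fun s : ℤ × ℤ => s.1 - s.2)
  rw [Finset.offDiag_card] at h2
  rcases Nat.lt_or_ge A.card 2 with h | h
  · interval_cases A.card <;> omega
  · have : A.card ^ 2 = A.card * A.card := sq _
    omega

theorem uniform_bound_of_card_le_sqrt (q : ℕ) (hq : 3 ≤ q)
    (A : Finset ℚ) (hA : 2 ≤ A.card) (hcard : (A.card : ℝ) ≤ Real.sqrt q)
    (p : ℕ) (hp : 2 ≤ p) (hpq : Nat.Coprime p q) :
    ∃ M : ℕ, ∀ α : ℝ,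
      (((fun x : ℝ => x + α) '' Dset p) ∩ Kset q A).Finite ∧
      (((fun x : ℝ => x + α) '' Dset p) ∩ Kset q A).ncard ≤ M := by
  have hcard2 : A.card ^ 2 ≤ q := by
    have h1 : (A.card : ℝ) ^ 2 ≤ q := by
      have := pow_le_pow_left₀ (Nat.cast_nonneg _) hcard 2
      rwa [Real.sq_sqrt (Nat.cast_nonneg _)] at this
    exact_mod_cast h1
  set N : ℕ := ∏ a ∈ A, a.den with hN
  have hNpos : 0 < N := Finset.prod_pos fun a _ => a.den_pos
  have hint : ∀ a ∈ A, (((N * a : ℚ).num : ℤ) : ℚ) = N * a := by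
    intro a ha
    obtain ⟨c, hc⟩ : a.den ∣ N := Finset.dvd_prod_of_mem _ ha
    have : (N * a : ℚ) = ((c * a.num : ℤ) : ℚ) := by
      rw [hc]
      push_cast
      rw [← Rat.mul_den_eq_num a]
      ring
    rw [this, Rat.num_intCast]
  set A' : Finset ℤ := A.image (fun a : ℚ => (N * a : ℚ).num) with hA'
  have hA'card : A'.card ^ 2 ≤ q := (Nat.pow_le_pow_left Finset.card_image_le 2).trans hcard2
  have hfin := ub_finite q hq p hp hpq _ (ub_card A' q hq hA'card)
  set S := {x : ℝ | (∃ n : ℕ, ∃ m : ℤ, x = m / (p : ℝ) ^ n) ∧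
      ∃ b : ℕ → ℤ, (∀ i, b i ∈ Finset.image (fun s : ℤ × ℤ => s.1 - s.2) (A' ×ˢ A')) ∧
        x = ∑' i : ℕ, (b i : ℝ) / (q : ℝ) ^ (i + 1)} with hS
  have hp0 : (p : ℝ) ≠ 0 := by positivity
  have hN0 : (N : ℝ) ≠ 0 := by positivity
  have hK : ∀ x ∈ Kset q A, ∃ c : ℕ → ℤ, (∀ i, c i ∈ A') ∧
      Summable (fun i : ℕ => (c i : ℝ) / (q : ℝ) ^ (i + 1)) ∧
      N * x = ∑' i : ℕ, (c i : ℝ) / (q : ℝ) ^ (i + 1) := by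
    rintro x ⟨a, ha, hx⟩
    refine ⟨fun i => (N * a i : ℚ).num, fun i => Finset.mem_image_of_mem _ (ha i), ?_, ?_⟩
    · refine (ub_tail q hq (∑ z ∈ A', z.natAbs) _ fun i => ?_).1
      have h1 : (N * a i : ℚ).num ∈ A' := Finset.mem_image_of_mem _ (ha i)
      have : (N * a i : ℚ).num.natAbs ≤ ∑ z ∈ A', z.natAbs :=
        Finset.single_le_sum (f := fun z : ℤ => z.natAbs) (fun _ _ => by simp) h1
      rw [Int.abs_eq_natAbs]
      exact_mod_cast this
    · rw [hx, ← tsum_mul_left]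
      refine tsum_congr fun i => ?_
      have : (((N * a i : ℚ).num : ℤ) : ℝ) = N * a i := by exact_mod_cast hint _ (ha i)
      rw [this]
      ring
  have hmain : ∀ α : ℝ, ∀ x ∈ ((fun x : ℝ => x + α) '' Dset p) ∩ Kset q A,
      ∀ y ∈ ((fun x : ℝ => x + α) '' Dset p) ∩ Kset q A, N * (y - x) ∈ S := by
    rintro α x ⟨⟨x', ⟨n, -, m, rfl⟩, hxx⟩, hxK⟩ y ⟨⟨y', ⟨n', -, m', rfl⟩, hyy⟩, hyK⟩
    refine ⟨⟨n + n', N * (m' * p ^ n - m * p ^ n'), ?_⟩, ?_⟩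
    · rw [← hxx, ← hyy]
      push_cast
      field_simp
      ring
    · obtain ⟨c, hc, hcs, hcx⟩ := hK x hxK
      obtain ⟨c', hc', hcs', hcy⟩ := hK y hyK
      refine ⟨fun i => c' i - c i, fun i => Finset.mem_image.mpr
        ⟨(c' i, c i), Finset.mem_product.mpr ⟨hc' i, hc i⟩, rfl⟩, ?_⟩
      rw [mul_sub, hcx, hcy, ← hcs'.tsum_sub hcs]
      refine tsum_congr fun i => ?_
      push_cast
      ring
  refine ⟨S.ncard, fun α => ?_⟩
  set E := ((fun x : ℝ => x + α) '' Dset p) ∩ Kset q A with hE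
  rcases E.eq_empty_or_nonempty with h | ⟨x, hx⟩
  · rw [h]; simp
  · have hmaps : Set.MapsTo (fun y : ℝ => N * (y - x)) E S := fun y hy => hmain α x hx y hy
    have hinj : Set.InjOn (fun y : ℝ => N * (y - x)) E := by
      intro y _ z _ hyz
      have := mul_left_cancel₀ hN0 hyz
      linarith
    exact ⟨Set.Finite.of_injOn hmaps hinj hfin, Set.ncard_le_ncard_of_injOn _ hmaps hinj hfin⟩
end

section
/- Let q be an integer with q ≥ 3, let A ⊂ ℚ be a finite set, and let N ∈ ℕ be such that N·a ∈ ℤ for every a ∈ A. Fix ρ > 1. For any finite words i = i_1…i_n ∈ A^n and j = j_1…j_m ∈ A^m, let h = f_i^{-1} ∘ f_j, where f_a(x) = (x+a)/q and f_i = f_{i_1} ∘ … ∘ f_{i_n}, f_j = f_{j_1} ∘ … ∘ f_{j_m}; the map h is the affine map h(x) = q^{n−m} x + ∑_{k=1}^m j_k q^{n−k} − ∑_{k=1}^n i_k q^{n−k}. If q^{n−m} ∈ [ρ^{-1}, ρ] and h(0) ≠ 0, then |h(0)| ≥ 1/(Nρ). -/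
theorem wsp_aux (q : ℕ) (hq : 3 ≤ q) (A : Finset ℚ) (N : ℕ)
    (hNA : ∀ a ∈ A, ∃ z : ℤ, (N : ℚ) * a = (z : ℚ))
    (n l M : ℕ) (hl : l ≤ M) (i : Fin l → ℚ) (hi : ∀ k, i k ∈ A) :
    ∃ z : ℤ, (N : ℝ) * (q : ℝ) ^ ((M : ℤ) - (n : ℤ)) *
      (∑ k : Fin l, (i k : ℝ) * (q : ℝ) ^ ((n : ℤ) - ((k : ℕ) + 1 : ℤ))) = z := by
  have hq0 : (q : ℝ) ≠ 0 := by
    have : q ≠ 0 := by omega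
    exact_mod_cast this
  choose z hz using fun k => hNA (i k) (hi k)
  refine ⟨∑ k : Fin l, z k * (q : ℤ) ^ (M - ((k : ℕ) + 1)), ?_⟩
  rw [Finset.mul_sum]
  push_cast
  refine Finset.sum_congr rfl fun k _ => ?_
  have h1 : (N : ℝ) * (i k : ℝ) = (z k : ℝ) := by exact_mod_cast hz k
  have h2 : (q : ℝ) ^ ((M : ℤ) - (n : ℤ)) * (q : ℝ) ^ ((n : ℤ) - ((k : ℕ) + 1 : ℤ))
      = (q : ℝ) ^ (M - ((k : ℕ) + 1)) := by
    rw [← zpow_add₀ hq0, ← zpow_natCast]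
    congr 1
    have := k.2
    omega
  rw [← h1, ← h2]
  ring

/-- The weak separation estimate for the IFS `F_{q,A} = { x ↦ (x+a)/q : a ∈ A }`:
if `h = f_i⁻¹ ∘ f_j` has contraction ratio `q^(n-m) ∈ [ρ⁻¹, ρ]` and `h 0 ≠ 0`, then
`|h 0| ≥ 1/(Nρ)`, where `h 0 = ∑_{k=1}^m j_k q^{n-k} - ∑_{k=1}^n i_k q^{n-k}`. -/
theorem wsp_estimate (q : ℕ) (hq : 3 ≤ q) (A : Finset ℚ) (N : ℕ) (hN : 1 ≤ N)
    (hNA : ∀ a ∈ A, ∃ z : ℤ, (N : ℚ) * a = (z : ℚ))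
    (ρ : ℝ) (hρ : 1 < ρ)
    (n m : ℕ) (i : Fin n → ℚ) (j : Fin m → ℚ)
    (hi : ∀ k, i k ∈ A) (hj : ∀ k, j k ∈ A)
    (hratio : (q : ℝ) ^ ((n : ℤ) - (m : ℤ)) ∈ Set.Icc ρ⁻¹ ρ)
    (hne : (∑ k : Fin m, (j k : ℝ) * (q : ℝ) ^ ((n : ℤ) - ((k : ℕ) + 1 : ℤ)))
         - (∑ k : Fin n, (i k : ℝ) * (q : ℝ) ^ ((n : ℤ) - ((k : ℕ) + 1 : ℤ))) ≠ 0) :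
    1 / (N * ρ) ≤
      |(∑ k : Fin m, (j k : ℝ) * (q : ℝ) ^ ((n : ℤ) - ((k : ℕ) + 1 : ℤ)))
         - (∑ k : Fin n, (i k : ℝ) * (q : ℝ) ^ ((n : ℤ) - ((k : ℕ) + 1 : ℤ)))| := by
  obtain ⟨a, ha⟩ := wsp_aux q hq A N hNA n m (max n m) (le_max_right _ _) j hj
  obtain ⟨b, hb⟩ := wsp_aux q hq A N hNA n n (max n m) (le_max_left _ _) i hi
  set S := (∑ k : Fin m, (j k : ℝ) * (q : ℝ) ^ ((n : ℤ) - ((k : ℕ) + 1 : ℤ)))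
         - (∑ k : Fin n, (i k : ℝ) * (q : ℝ) ^ ((n : ℤ) - ((k : ℕ) + 1 : ℤ))) with hS
  have hqpos : (0 : ℝ) < q := by
    have : 0 < q := by omega
    exact_mod_cast this
  have hNpos : (0 : ℝ) < N := by exact_mod_cast hN
  have hρ0 : (0 : ℝ) < ρ := by linarith
  set c := (q : ℝ) ^ (((max n m : ℕ) : ℤ) - (n : ℤ)) with hc
  have hcpos : 0 < c := zpow_pos hqpos _
  have hcρ : c ≤ ρ := by
    rcases le_total m n with h | h
    · rw [hc, max_eq_left h]; simpa using hρ.le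
    · rw [hc, max_eq_right h, ← neg_sub, zpow_neg]
      exact inv_le_of_inv_le₀ hρ0 hratio.1
  have hint : (N : ℝ) * c * S = ((a - b : ℤ) : ℝ) := by
    rw [hS, mul_sub, ha, hb]; push_cast; ring
  have hz : a - b ≠ 0 := by
    intro h0
    rw [h0, Int.cast_zero] at hint
    exact (mul_ne_zero (mul_ne_zero hNpos.ne' hcpos.ne') hne) hint
  have h1 : (1 : ℝ) ≤ |((a - b : ℤ) : ℝ)| := by exact_mod_cast Int.one_le_abs hz
  rw [← hint, abs_mul, abs_of_pos (mul_pos hNpos hcpos)] at h1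
  rw [div_le_iff₀ (mul_pos hNpos hρ0)]
  calc (1 : ℝ) ≤ N * c * |S| := h1
    _ ≤ N * ρ * |S| := by gcongr
    _ = |S| * (N * ρ) := by ring
end
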